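/- Let $X$ be a topological space and $K$ a sheaf of commutative rings on $X$. A matrix $K$-algebra of size $q+1$ is a sheaf of associative unital $K$-algebras with a decomposition $A=\bigoplus_{i,j=0}^q A_{ij}$ into $K$-submodules, multiplied as matrices: the product maps $A_{ij}\otimes_K A_{jk}$ into $A_{ik}$, the product of $A_{ij}$ and $A_{kl}$ is zero for $j\ne k$, and $1=\sum_i 1_i$ with $1_i\in A_{ii}$, so that the left action of $A_{ii}$ and the right action of $A_{jj}$ on $A_{ij}$ are unital. Assume that (a) for all $i,j$, the sheaf $A_{ij}$ is locally free of rank one as a left $A_{ii}$-module and as a right $A_{jj}$-module; (b) for all $j\le i$, the morphism of sheaves $A_{ij}\to \underline{\mathrm{Hom}}_{A_{jj}}(A_{ji},A_{jj})$, $x\mapsto (y\mapsto yx)$, into the sheaf of homomorphisms of left $A_{jj}$-modules, given by the product $A_{ji}\otimes A_{ij}\to A_{jj}$, is an isomorphism. Let $f\colon[p]\to[q]$ be a morphism in the simplex category $\Delta$, i.e. a non-decreasing map $\{0,\dots,p\}\to\{0,\dots,q\}$, and let $f^\sharp A=\bigoplus_{i,j=0}^p (f^\sharp A)_{ij}$ be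 the matrix algebra with $(f^\sharp A)_{ij}=A_{f(i)f(j)}$ and the matrix product induced by that of $A$. Let $A_f=\bigoplus_{i=0}^q\bigoplus_{j=0}^p A_{i f(j)}$, an $(A,f^\sharp A)$-bimodule, and $A_f^{-1}=\bigoplus_{i=0}^p\bigoplus_{j=0}^q A_{f(i)j}$, an $(f^\sharp A,A)$-bimodule, with actions given by matrix multiplication. Let $$\overrightarrow{\alpha}_f\colon A_f\otimes_{f^\sharp A}A_f^{-1}\to A,\qquad \overleftarrow{\alpha}_f\colon A_f^{-1}\otimes_A A_f\to f^\sharp A$$ be the morphisms of bimodules given by matrix multiplication, $\alpha(b\otimes c)_{ij}=\sum_k b_{ik}c_{kj}$ (for $\alpha$ either of the two), where the tensor products are tensor products of sheaves. Then $A_f$ and $A_f^{-1}$, together with $\overrightarrow{\alpha}_f$ and $\overleftarrow{\alpha}_f$, implement a Morita equivalence between $f^\sharp A$ and $A$. That is, $\overrightarrow{\alpha}_f$ and $\overleftarrow{\alpha}_f$ are isomorphisms of bimodules, and the functors $A_f\otimes_{f^\sharp A}(-)$ and $A_f^{-1}\otimes_A(-)$ between the categories of sheaves of left $f^\sharp A$-modules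 and of left $A$-modules form an adjoint equivalence, whose counit is $b\otimes c\otimes m\mapsto \overrightarrow{\alpha}_f(b\otimes c)\,m$ and the inverse of whose unit is $c\otimes b\otimes m\mapsto\overleftarrow{\alpha}_f(c\otimes b)\,m$. -/

import Mathlib

open CategoryTheory TopologicalSpace MulOpposite
open scoped TensorProduct

universe u


noncomputable section

/-! ### Tensor products over a noncommutative ring -/

section BalancedTensor

variable (S : Type*) [Ring S] (N M : Type*) [AddCommGroup N] [AddCommGroup M]
  [Module Sᵐᵒᵖ N] [Module S M]

/-- The subgroup of `N ⊗_ℤ M` generated by the elements `n s ⊗ m - n ⊗ s m`. -/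
def balancedRel : AddSubgroup (N ⊗[ℤ] M) :=
  AddSubgroup.closure {t | ∃ (n : N) (s : S) (m : M), t = (op s • n) ⊗ₜ m - n ⊗ₜ (s • m)}

/-- The tensor product `N ⊗_S M` of a right `S`-module `N` and a left `S`-module `M`. -/
def BalancedTensor : Type _ := (N ⊗[ℤ] M) ⧸ balancedRel S N M

instance : AddCommGroup (BalancedTensor S N M) :=
  inferInstanceAs (AddCommGroup ((N ⊗[ℤ] M) ⧸ balancedRel S N M))

namespace BalancedTensor

variable {N M}

/-- The pure tensor `n ⊗ m`. -/
def tmul (n : N) (m : M) : BalancedTensor S N M := QuotientAddGroup.mk (n ⊗ₜ[ℤ] m)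

theorem add_tmul (n n' : N) (m : M) : tmul S (n + n') m = tmul S n m + tmul S n' m := by
  unfold tmul; rw [TensorProduct.add_tmul]; rfl

theorem tmul_add (n : N) (m m' : M) : tmul S n (m + m') = tmul S n m + tmul S n m' := by
  unfold tmul; rw [TensorProduct.tmul_add]; rfl

theorem smul_tmul (n : N) (s : S) (m : M) : tmul S (op s • n) m = tmul S n (s • m) := by
  refine (QuotientAddGroup.eq_iff_sub_mem).2 ?_
  exact AddSubgroup.subset_closure ⟨n, s, m, rfl⟩

variable {S}

theorem induction {C : BalancedTensor S N M → Prop} (h0 : C 0)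
    (ht : ∀ n m, C (tmul S n m)) (ha : ∀ x y, C x → C y → C (x + y)) (x) : C x := by
  obtain ⟨x, rfl⟩ := QuotientAddGroup.mk_surjective x
  induction x using TensorProduct.induction_on with
  | zero => exact h0
  | tmul n m => exact ht n m
  | add x y hx hy => exact ha _ _ hx hy

variable {P : Type*} [AddCommGroup P]

/-- The additive map on `N ⊗_S M` induced by a balanced biadditive map. -/
def lift (φ : N →+ M →+ P) (h : ∀ n (s : S) m, φ (op s • n) m = φ n (s • m)) :
    BalancedTensor S N M →+ P :=
  QuotientAddGroup.lift _
    (TensorProduct.liftAddHom φ (fun r n m => by simp)) (by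
      rw [balancedRel, AddSubgroup.closure_le]
      rintro _ ⟨n, s, m, rfl⟩
      simp [h])

@[simp] theorem lift_tmul (φ : N →+ M →+ P) (h : ∀ n (s : S) m, φ (op s • n) m = φ n (s • m))
    (n : N) (m : M) : lift φ h (tmul S n m) = φ n m := rfl

theorem hom_ext {f g : BalancedTensor S N M →+ P}
    (h : ∀ n m, f (tmul S n m) = g (tmul S n m)) : f = g := by
  ext x
  induction x using induction with
  | h0 => simp
  | ht n m => exact h n m
  | ha x y hx hy => simp [hx, hy]

/-- Functoriality of `N ⊗_S M` in `S`, `N` and `M`. -/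
def map {S' : Type*} [Ring S'] {N' M' : Type*} [AddCommGroup N'] [AddCommGroup M']
    [Module S'ᵐᵒᵖ N'] [Module S' M'] (σ : S →+* S') (g : N →+ N') (h : M →+ M')
    (hg : ∀ (s : S) n, g (op s • n) = op (σ s) • g n) (hh : ∀ (s : S) m, h (s • m) = σ s • h m) :
    BalancedTensor S N M →+ BalancedTensor S' N' M' :=
  lift (AddMonoidHom.mk' (fun n => AddMonoidHom.mk' (fun m => tmul S' (g n) (h m))
      (fun m m' => by rw [map_add, tmul_add]))
      (fun n n' => by ext m; exact (by rw [map_add]; exact add_tmul _ _ _ _ :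
        tmul S' (g (n + n')) (h m) = tmul S' (g n) (h m) + tmul S' (g n') (h m))))
    (fun n s m => by
      change tmul S' (g (op s • n)) (h m) = tmul S' (g n) (h (s • m))
      rw [hg, hh, smul_tmul])

@[simp] theorem map_tmul {S' : Type*} [Ring S'] {N' M' : Type*} [AddCommGroup N']
    [AddCommGroup M'] [Module S'ᵐᵒᵖ N'] [Module S' M'] (σ : S →+* S') (g : N →+ N') (h : M →+ M')
    (hg : ∀ (s : S) n, g (op s • n) = op (σ s) • g n) (hh : ∀ (s : S) m, h (s • m) = σ s • h m)
    (n : N) (m : M) : map σ g h hg hh (tmul S n m) = tmul S' (g n) (h m) := rfl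

variable (S N M)

/-- The left action on `N ⊗_S M` given by a left action on `N` commuting with that of `S`. -/
@[reducible]
def leftModule (R : Type*) [Ring R] [Module R N] [SMulCommClass R Sᵐᵒᵖ N] :
    Module R (BalancedTensor S N M) :=
  Module.compHom _ (
    { toFun := fun r => map (RingHom.id S) (DistribSMul.toAddMonoidHom N r)
        (AddMonoidHom.id M) (fun s n => smul_comm r (op s) n) (fun _ _ => rfl)
      map_one' := hom_ext fun n m => by
        change tmul S ((1 : R) • n) m = tmul S n m
        rw [one_smul]
      map_mul' := fun r r' => hom_ext fun n m => by
        change tmul S ((r * r') • n) m = tmul S (r • r' • n) m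
        rw [mul_smul]
      map_zero' := hom_ext fun n m => by
        change tmul S ((0 : R) • n) m = 0
        have := add_tmul S (0 : N) 0 m
        rw [zero_smul]
        simpa using this
      map_add' := fun r r' => hom_ext fun n m => by
        change tmul S ((r + r') • n) m = tmul S (r • n) m + tmul S (r' • n) m
        rw [add_smul, add_tmul] } :
    R →+* AddMonoid.End (BalancedTensor S N M))

/-- The right action on `N ⊗_S M` given by a right action on `M` commuting with that of `S`. -/
@[reducible]
def rightModule (R : Type*) [Ring R] [Module R M] [SMulCommClass R S M] :
    Module R (BalancedTensor S N M) :=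
  Module.compHom _ (
    { toFun := fun r => map (RingHom.id S) (AddMonoidHom.id N)
        (DistribSMul.toAddMonoidHom M r) (fun _ _ => rfl) (fun s m => smul_comm r s m)
      map_one' := hom_ext fun n m => by
        change tmul S n ((1 : R) • m) = tmul S n m
        rw [one_smul]
      map_mul' := fun r r' => hom_ext fun n m => by
        change tmul S n ((r * r') • m) = tmul S n (r • r' • m)
        rw [mul_smul]
      map_zero' := hom_ext fun n m => by
        change tmul S n ((0 : R) • m) = 0
        have := tmul_add S n (0 : M) 0
        rw [zero_smul]
        simpa using this
      map_add' := fun r r' => hom_ext fun n m => by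
        change tmul S n ((r + r') • m) = tmul S n (r • m) + tmul S n (r' • m)
        rw [add_smul, tmul_add] } :
    R →+* AddMonoid.End (BalancedTensor S N M))

variable {S N M}

theorem map_left_smul {S' : Type*} [Ring S'] {N' M' : Type*} [AddCommGroup N']
    [AddCommGroup M'] [Module S'ᵐᵒᵖ N'] [Module S' M'] (σ : S →+* S') (g : N →+ N') (h : M →+ M')
    (hg : ∀ (s : S) n, g (op s • n) = op (σ s) • g n) (hh : ∀ (s : S) m, h (s • m) = σ s • h m)
    {R R' : Type*} [Ring R] [Module R N] [SMulCommClass R Sᵐᵒᵖ N]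
    [Ring R'] [Module R' N'] [SMulCommClass R' S'ᵐᵒᵖ N']
    (r : R) (r' : R') (hr : ∀ n, g (r • n) = r' • g n) (x : BalancedTensor S N M) :
    letI := leftModule S N M R
    letI := leftModule S' N' M' R'
    map σ g h hg hh (r • x) = r' • map σ g h hg hh x := by
  let _ := leftModule S N M R
  let _ := leftModule S' N' M' R'
  induction x using induction with
  | h0 => rw [smul_zero, map_zero, smul_zero]
  | ht n m => exact congrArg (fun t => tmul S' t (h m)) (hr n)
  | ha x y hx hy => rw [smul_add, map_add, map_add, smul_add, hx, hy]

theorem map_right_smul {S' : Type*} [Ring S'] {N' M' : Type*} [AddCommGroup N']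
    [AddCommGroup M'] [Module S'ᵐᵒᵖ N'] [Module S' M'] (σ : S →+* S') (g : N →+ N') (h : M →+ M')
    (hg : ∀ (s : S) n, g (op s • n) = op (σ s) • g n) (hh : ∀ (s : S) m, h (s • m) = σ s • h m)
    {R R' : Type*} [Ring R] [Module R M] [SMulCommClass R S M]
    [Ring R'] [Module R' M'] [SMulCommClass R' S' M']
    (r : R) (r' : R') (hr : ∀ m, h (r • m) = r' • h m) (x : BalancedTensor S N M) :
    letI := rightModule S N M R
    letI := rightModule S' N' M' R'
    map σ g h hg hh (r • x) = r' • map σ g h hg hh x := by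
  let _ := rightModule S N M R
  let _ := rightModule S' N' M' R'
  induction x using induction with
  | h0 => rw [smul_zero, map_zero, smul_zero]
  | ht n m => exact congrArg (fun t => tmul S' (g n) t) (hr m)
  | ha x y hx hy => rw [smul_add, map_add, map_add, smul_add, hx, hy]

theorem lift_left_smul (φ : N →+ M →+ P) (h : ∀ n (s : S) m, φ (op s • n) m = φ n (s • m))
    {R R' : Type*} [Ring R] [Module R N] [SMulCommClass R Sᵐᵒᵖ N] [Ring R'] [Module R' P]
    (r : R) (r' : R') (hr : ∀ n m, φ (r • n) m = r' • φ n m) (x : BalancedTensor S N M) :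
    letI := leftModule S N M R
    lift φ h (r • x) = r' • lift φ h x := by
  let _ := leftModule S N M R
  induction x using induction with
  | h0 => rw [smul_zero, map_zero, smul_zero]
  | ht n m => exact hr n m
  | ha x y hx hy => rw [smul_add, map_add, map_add, smul_add, hx, hy]

theorem lift_right_smul (φ : N →+ M →+ P) (h : ∀ n (s : S) m, φ (op s • n) m = φ n (s • m))
    {R R' : Type*} [Ring R] [Module R M] [SMulCommClass R S M] [Ring R'] [Module R' P]
    (r : R) (r' : R') (hr : ∀ n m, φ n (r • m) = r' • φ n m) (x : BalancedTensor S N M) :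
    letI := rightModule S N M R
    lift φ h (r • x) = r' • lift φ h x := by
  let _ := rightModule S N M R
  induction x using induction with
  | h0 => rw [smul_zero, map_zero, smul_zero]
  | ht n m => exact hr n m
  | ha x y hx hy => rw [smul_add, map_add, map_add, smul_add, hx, hy]

theorem left_right_smul {R R' : Type*} [Ring R] [Module R N] [SMulCommClass R Sᵐᵒᵖ N]
    [Ring R'] [Module R' M] [SMulCommClass R' S M]
    (r : R) (r' : R') (x : BalancedTensor S N M) :
    (leftModule S N M R).smul r ((rightModule S N M R').smul r' x) =
      (rightModule S N M R').smul r' ((leftModule S N M R).smul r x) := by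
  let _ := leftModule S N M R
  let _ := rightModule S N M R'
  change r • r' • x = r' • r • x
  induction x using induction with
  | h0 => simp only [smul_zero]
  | ht n m => rfl
  | ha x y hx hy => simp only [smul_add, hx, hy]

theorem left_eq_right_smul {R R' : Type*} [Ring R] [Module R N] [SMulCommClass R Sᵐᵒᵖ N]
    [Ring R'] [Module R' M] [SMulCommClass R' S M] (r : R) (s : S) (r' : R')
    (h : ∀ n : N, r • n = op s • n) (h' : ∀ m : M, s • m = r' • m) (x : BalancedTensor S N M) :
    (leftModule S N M R).smul r x = (rightModule S N M R').smul r' x := by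
  let _ := leftModule S N M R
  let _ := rightModule S N M R'
  change r • x = r' • x
  induction x using induction with
  | h0 => simp only [smul_zero]
  | ht n m =>
    change tmul S (r • n) m = tmul S n (r' • m)
    rw [h, smul_tmul, h']
  | ha x y hx hy => simp only [smul_add, hx, hy]

end BalancedTensor

end BalancedTensor
/-! ### Sheaves of algebras and bimodules -/

/-- The site of open subsets of `X`. -/
abbrev siteOf (X : TopCat.{u}) : GrothendieckTopology (Opens X) := Opens.grothendieckTopology X

/-- A sheaf of associative unital `K`-algebras on `X`. -/
structure SheafAlgebra {X : TopCat.{u}} (K : Sheaf (siteOf X) CommRingCat.{u}) where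
  /-- the underlying sheaf of rings -/
  ring : Sheaf (siteOf X) RingCat.{u}
  /-- the structure morphism `K → A` -/
  unit (U : (Opens X)ᵒᵖ) : K.obj.obj U →+* ring.obj.obj U
  map_unit {U V : (Opens X)ᵒᵖ} (g : U ⟶ V) (k : K.obj.obj U) :
    ring.obj.map g (unit U k) = unit V (K.obj.map g k)
  commutes (U : (Opens X)ᵒᵖ) (k : K.obj.obj U) (a : ring.obj.obj U) :
    unit U k * a = a * unit U k

/-- A sheaf of `A ⊗_K B^op`-modules, i.e. an `(A, B)`-bimodule on which the two actions of `K`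
agree.  The right action of `B` is written as a left action of the opposite ring. -/
structure Bimodule {X : TopCat.{u}} {K : Sheaf (siteOf X) CommRingCat.{u}}
    (A B : SheafAlgebra K) where
  /-- the underlying sheaf of abelian groups -/
  carrier : Sheaf (siteOf X) AddCommGrpCat.{u}
  [left (U : (Opens X)ᵒᵖ) : Module (A.ring.obj.obj U) (carrier.obj.obj U)]
  [right (U : (Opens X)ᵒᵖ) : Module (B.ring.obj.obj U)ᵐᵒᵖ (carrier.obj.obj U)]
  smul_comm (U : (Opens X)ᵒᵖ) (a : A.ring.obj.obj U) (b : (B.ring.obj.obj U)ᵐᵒᵖ)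
    (m : carrier.obj.obj U) : a • b • m = b • a • m
  map_smul {U V : (Opens X)ᵒᵖ} (g : U ⟶ V) (a : A.ring.obj.obj U) (m : carrier.obj.obj U) :
    carrier.obj.map g (a • m) = A.ring.obj.map g a • carrier.obj.map g m
  map_op_smul {U V : (Opens X)ᵒᵖ} (g : U ⟶ V) (b : B.ring.obj.obj U) (m : carrier.obj.obj U) :
    carrier.obj.map g (op b • m) = op (B.ring.obj.map g b) • carrier.obj.map g m
  central (U : (Opens X)ᵒᵖ) (k : K.obj.obj U) (m : carrier.obj.obj U) :
    A.unit U k • m = op (B.unit U k) • m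

attribute [instance] Bimodule.left Bimodule.right

section

variable {X : TopCat.{u}} {K : Sheaf (siteOf X) CommRingCat.{u}}

/-- The sheaf of opposite rings of `A`. -/
def SheafAlgebra.opRing (A : SheafAlgebra K) : Sheaf (siteOf X) RingCat.{u} where
  obj :=
    { obj := fun U => RingCat.of (A.ring.obj.obj U)ᵐᵒᵖ
      map := fun g => RingCat.ofHom (RingHom.op (A.ring.obj.map g).hom)
      map_id := fun U => by ext x; simp
      map_comp := fun g h => by ext x; simp }
  property := by
    rw [Presheaf.isSheaf_iff_isSheaf_forget _ _ (forget RingCat)]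
    have h := (Presheaf.isSheaf_iff_isSheaf_forget _ _ (forget RingCat)).1 A.ring.property
    refine Presheaf.isSheaf_of_iso_iff (NatIso.ofComponents
      (fun U => (opEquiv (α := A.ring.obj.obj U)).toIso) ?_) |>.1 h
    intro U V g
    rfl

namespace Bimodule

variable {A B C : SheafAlgebra K}

instance (P : Bimodule A B) (U : (Opens X)ᵒᵖ) :
    SMulCommClass (A.ring.obj.obj U) (B.ring.obj.obj U)ᵐᵒᵖ (P.carrier.obj.obj U) :=
  ⟨P.smul_comm U⟩

instance (P : Bimodule A B) (U : (Opens X)ᵒᵖ) :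
    SMulCommClass (B.ring.obj.obj U)ᵐᵒᵖ (A.ring.obj.obj U) (P.carrier.obj.obj U) :=
  ⟨fun b a m => (P.smul_comm U a b m).symm⟩

/-- Morphisms of bimodules: morphisms of sheaves linear for both actions. -/
@[ext]
structure Hom (P Q : Bimodule A B) where
  /-- the underlying morphism of sheaves of abelian groups -/
  hom : P.carrier ⟶ Q.carrier
  map_smul (U : (Opens X)ᵒᵖ) (a : A.ring.obj.obj U) (m : P.carrier.obj.obj U) :
    hom.hom.app U (a • m) = a • hom.hom.app U m
  map_op_smul (U : (Opens X)ᵒᵖ) (b : B.ring.obj.obj U) (m : P.carrier.obj.obj U) :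
    hom.hom.app U (op b • m) = op b • hom.hom.app U m

instance : Category (Bimodule A B) where
  Hom := Hom
  id P := ⟨𝟙 _, fun _ _ _ => rfl, fun _ _ _ => rfl⟩
  comp f g := ⟨f.hom ≫ g.hom,
    fun U a m => (congrArg _ (f.map_smul U a m)).trans (g.map_smul U a _),
    fun U a m => (congrArg _ (f.map_op_smul U a m)).trans (g.map_op_smul U a _)⟩

/-- `A` as a bimodule over itself. -/
def regular (A : SheafAlgebra K) : Bimodule A A where
  carrier := (sheafCompose (siteOf X) (forget₂ RingCat.{u} AddCommGrpCat.{u})).obj A.ring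
  left U := inferInstanceAs (Module (A.ring.obj.obj U) (A.ring.obj.obj U))
  right U := inferInstanceAs (Module (A.ring.obj.obj U)ᵐᵒᵖ (A.ring.obj.obj U))
  smul_comm U a b m := (mul_assoc (G := A.ring.obj.obj U) a m b.unop).symm
  map_smul g a m := map_mul (M := A.ring.obj.obj _) (A.ring.obj.map g).hom a m
  map_op_smul g b m := map_mul (M := A.ring.obj.obj _) (A.ring.obj.map g).hom m b
  central U k m := A.commutes U k m

/-- The underlying sheaf of left modules of a bimodule. -/
def leftModule (P : Bimodule A B) : SheafOfModules.{u} A.ring where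
  val := PresheafOfModules.ofPresheaf P.carrier.obj (fun _ _ g a m => P.map_smul g a m)
  isSheaf := P.carrier.property

/-- The presheaf `U ↦ P(U) ⊗_{B(U)} M(U)` for a bimodule `P` and a left `B`-module `M`. -/
def tensorPresheaf (P : Bimodule A B) (M : PresheafOfModules.{u} B.ring.obj) :
    (Opens X)ᵒᵖ ⥤ AddCommGrpCat.{u} where
  obj U := AddCommGrpCat.of (BalancedTensor (B.ring.obj.obj U) (P.carrier.obj.obj U) (M.obj U))
  map {U V} g := AddCommGrpCat.ofHom (BalancedTensor.map (B.ring.obj.map g).hom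
    (P.carrier.obj.map g).hom (M.presheaf.map g).hom
    (fun s n => P.map_op_smul g s n) (fun s m => M.map_smul g s m))
  map_id U := by
    refine AddCommGrpCat.hom_ext (BalancedTensor.hom_ext fun n m => ?_)
    change BalancedTensor.tmul _ (P.carrier.obj.map (𝟙 U) n) (M.presheaf.map (𝟙 U) m) =
      BalancedTensor.tmul _ n m
    rw [CategoryTheory.Functor.map_id, CategoryTheory.Functor.map_id]
    rfl
  map_comp {U V W} g h := by
    refine AddCommGrpCat.hom_ext (BalancedTensor.hom_ext fun n m => ?_)
    change BalancedTensor.tmul _ (P.carrier.obj.map (g ≫ h) n) (M.presheaf.map (g ≫ h) m) =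
      BalancedTensor.tmul _ (P.carrier.obj.map h (P.carrier.obj.map g n))
        (M.presheaf.map h (M.presheaf.map g m))
    rw [CategoryTheory.Functor.map_comp, CategoryTheory.Functor.map_comp]
    rfl

/-- The presheaf `P ⊗_B M` with its left action of `A`. -/
def tensorLeft (P : Bimodule A B) (M : PresheafOfModules.{u} B.ring.obj) :
    PresheafOfModules.{u} A.ring.obj :=
  letI (U : (Opens X)ᵒᵖ) : Module (A.ring.obj.obj U) ((P.tensorPresheaf M).obj U) :=
    BalancedTensor.leftModule (B.ring.obj.obj U) (P.carrier.obj.obj U) (M.obj U)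
      (A.ring.obj.obj U)
  PresheafOfModules.ofPresheaf (P.tensorPresheaf M) (fun _ _ g a x =>
    BalancedTensor.map_left_smul (B.ring.obj.map g).hom (P.carrier.obj.map g).hom
      (M.presheaf.map g).hom (fun s n => P.map_op_smul g s n) (fun s m => M.map_smul g s m)
      a (A.ring.obj.map g a) (P.map_smul g a) x)

/-- The presheaf `P ⊗_B Q` with its right action of `C`. -/
def tensorRight (P : Bimodule A B) (Q : Bimodule B C) : PresheafOfModules.{u} C.opRing.obj :=
  letI (U : (Opens X)ᵒᵖ) : Module (C.opRing.obj.obj U)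
      ((P.tensorPresheaf Q.leftModule.val).obj U) :=
    BalancedTensor.rightModule (B.ring.obj.obj U) (P.carrier.obj.obj U) (Q.carrier.obj.obj U)
      (C.ring.obj.obj U)ᵐᵒᵖ
  PresheafOfModules.ofPresheaf (P.tensorPresheaf Q.leftModule.val) (fun U V g c x =>
    BalancedTensor.map_right_smul (R := (C.ring.obj.obj U)ᵐᵒᵖ) (R' := (C.ring.obj.obj V)ᵐᵒᵖ)
      (B.ring.obj.map g).hom (P.carrier.obj.map g).hom (Q.carrier.obj.map g).hom
      (fun s n => P.map_op_smul g s n) (fun s m => Q.map_smul g s m)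
      c (op (C.ring.obj.map g (unop c))) (Q.map_op_smul g (unop c)) x)

/-- The map `P(U) ⊗ M(U) → P(U) ⊗ M'(U)` induced by a morphism `M → M'`. -/
def tensorMap (P : Bimodule A B) {M M' : PresheafOfModules.{u} B.ring.obj} (φ : M ⟶ M')
    (U : (Opens X)ᵒᵖ) :
    BalancedTensor (B.ring.obj.obj U) (P.carrier.obj.obj U) (M.obj U) →+
      BalancedTensor (B.ring.obj.obj U) (P.carrier.obj.obj U) (M'.obj U) :=
  BalancedTensor.map (RingHom.id _) (AddMonoidHom.id _) (φ.app U).hom.toAddMonoidHom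
    (fun _ _ => rfl) (fun s m => (φ.app U).hom.map_smul s m)

/-- The presheaf tensor product `M ↦ P ⊗_B M` as a functor. -/
def tensorLeftFunctor (P : Bimodule A B) :
    PresheafOfModules.{u} B.ring.obj ⥤ PresheafOfModules.{u} A.ring.obj where
  obj M := P.tensorLeft M
  map {M M'} φ := PresheafOfModules.homMk (M₁ := P.tensorLeft M) (M₂ := P.tensorLeft M')
    { app := fun U => AddCommGrpCat.ofHom (P.tensorMap φ U)
      naturality := fun U V g => AddCommGrpCat.hom_ext (BalancedTensor.hom_ext fun n m =>
        congrArg (BalancedTensor.tmul _ (P.carrier.obj.map g n))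
          (PresheafOfModules.naturality_apply φ g m)) }
    (fun U a x => BalancedTensor.map_left_smul (R := A.ring.obj.obj U) (R' := A.ring.obj.obj U)
      (RingHom.id _) (AddMonoidHom.id (P.carrier.obj.obj U)) (φ.app U).hom.toAddMonoidHom
      (fun _ _ => rfl) (fun s m => (φ.app U).hom.map_smul s m) a a (fun _ => rfl) x)
  map_id M := by
    refine PresheafOfModules.hom_ext fun U => ModuleCat.hom_ext (LinearMap.ext fun x => ?_)
    exact DFunLike.congr_fun (BalancedTensor.hom_ext (S := B.ring.obj.obj U)
      (f := P.tensorMap (𝟙 M) U) (g := AddMonoidHom.id _) fun n m => rfl) x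
  map_comp {M M' M''} φ ψ := by
    refine PresheafOfModules.hom_ext fun U => ModuleCat.hom_ext (LinearMap.ext fun x => ?_)
    exact DFunLike.congr_fun (BalancedTensor.hom_ext (S := B.ring.obj.obj U)
      (f := P.tensorMap (φ ≫ ψ) U) (g := (P.tensorMap ψ U).comp (P.tensorMap φ U))
      fun n m => rfl) x

/-- The functor `M ↦ P ⊗_B M` from sheaves of left `B`-modules to sheaves of left `A`-modules:
the sheafification of `U ↦ P(U) ⊗_{B(U)} M(U)`. -/
def tensorFunctor (P : Bimodule A B) : SheafOfModules.{u} B.ring ⥤ SheafOfModules.{u} A.ring :=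
  SheafOfModules.forget B.ring ⋙ P.tensorLeftFunctor ⋙
    PresheafOfModules.sheafification (𝟙 A.ring.obj)

/-- The section `b ⊗ m` of `P ⊗_B M`. -/
def tmul (P : Bimodule A B) (M : SheafOfModules.{u} B.ring) {U : (Opens X)ᵒᵖ}
    (b : P.carrier.obj.obj U) (m : M.val.obj U) : (P.tensorFunctor.obj M).val.obj U :=
  (CategoryTheory.toSheafify (siteOf X) (P.tensorPresheaf M.val)).app U
    (BalancedTensor.tmul (B.ring.obj.obj U) b m)

/-- The underlying sheaf of abelian groups of `P ⊗_B Q`. -/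
def tensorSheaf (P : Bimodule A B) (Q : Bimodule B C) : Sheaf (siteOf X) AddCommGrpCat.{u} :=
  (presheafToSheaf (siteOf X) AddCommGrpCat.{u}).obj (P.tensorPresheaf Q.leftModule.val)

/-- The canonical map from the presheaf tensor product to its sheafification. -/
def toTensorSheaf (P : Bimodule A B) (Q : Bimodule B C) :
    P.tensorPresheaf Q.leftModule.val ⟶ (P.tensorSheaf Q).obj :=
  CategoryTheory.toSheafify (siteOf X) (P.tensorPresheaf Q.leftModule.val)

instance (P : Bimodule A B) (Q : Bimodule B C) :
    Presheaf.IsLocallyInjective (siteOf X) (P.toTensorSheaf Q) :=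
  inferInstanceAs (Presheaf.IsLocallyInjective (siteOf X)
    (CategoryTheory.toSheafify (siteOf X) (P.tensorPresheaf Q.leftModule.val)))

instance (P : Bimodule A B) (Q : Bimodule B C) :
    Presheaf.IsLocallySurjective (siteOf X) (P.toTensorSheaf Q) :=
  inferInstanceAs (Presheaf.IsLocallySurjective (siteOf X)
    (CategoryTheory.toSheafify (siteOf X) (P.tensorPresheaf Q.leftModule.val)))

/-- `toTensorSheaf`, on the presheaf of left modules. -/
def toTensorLeft (P : Bimodule A B) (Q : Bimodule B C) :
    (P.tensorLeft Q.leftModule.val).presheaf ⟶ (P.tensorSheaf Q).obj :=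
  P.toTensorSheaf Q

instance (P : Bimodule A B) (Q : Bimodule B C) :
    Presheaf.IsLocallyInjective (siteOf X) (P.toTensorLeft Q) :=
  inferInstanceAs (Presheaf.IsLocallyInjective (siteOf X) (P.toTensorSheaf Q))

instance (P : Bimodule A B) (Q : Bimodule B C) :
    Presheaf.IsLocallySurjective (siteOf X) (P.toTensorLeft Q) :=
  inferInstanceAs (Presheaf.IsLocallySurjective (siteOf X) (P.toTensorSheaf Q))

/-- `toTensorSheaf`, on the presheaf of right modules. -/
def toTensorRight (P : Bimodule A B) (Q : Bimodule B C) :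
    (P.tensorRight Q).presheaf ⟶ (P.tensorSheaf Q).obj :=
  P.toTensorSheaf Q

instance (P : Bimodule A B) (Q : Bimodule B C) :
    Presheaf.IsLocallyInjective (siteOf X) (P.toTensorRight Q) :=
  inferInstanceAs (Presheaf.IsLocallyInjective (siteOf X) (P.toTensorSheaf Q))

instance (P : Bimodule A B) (Q : Bimodule B C) :
    Presheaf.IsLocallySurjective (siteOf X) (P.toTensorRight Q) :=
  inferInstanceAs (Presheaf.IsLocallySurjective (siteOf X) (P.toTensorSheaf Q))

/-- The sheaf tensor product `P ⊗_B Q` of bimodules, with its left action of `A` and its right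
action of `C`.  Its underlying sheaf of left modules is `P.tensorFunctor.obj Q.leftModule`. -/
def tensor (P : Bimodule A B) (Q : Bimodule B C) : Bimodule A C where
  carrier := P.tensorSheaf Q
  left U := PresheafOfModules.Sheafify.module (𝟙 A.ring.obj) (P.toTensorLeft Q) U
  right U := PresheafOfModules.Sheafify.module (R := C.opRing) (𝟙 C.opRing.obj)
    (P.toTensorRight Q) U
  smul_comm U a c m := by
    let F := P.tensorSheaf Q
    let φ := P.toTensorSheaf Q
    refine F.isSeparated _ _ (Presheaf.imageSieve_mem (siteOf X) φ m) _ _ ?_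
    rintro Y f ⟨m₀, hm₀⟩
    have hl : ∀ (n : F.obj.obj U) (n₀), φ.app _ n₀ = F.obj.map f.op n → _ := fun n n₀ hn =>
      PresheafOfModules.Sheafify.map_smul_eq (𝟙 A.ring.obj) (P.toTensorLeft Q) a n f.op (A.ring.obj.map f.op a) rfl n₀ hn
    have hr : ∀ (n : F.obj.obj U) (n₀), φ.app _ n₀ = F.obj.map f.op n → _ := fun n n₀ hn =>
      PresheafOfModules.Sheafify.map_smul_eq (R := C.opRing) (𝟙 C.opRing.obj) (P.toTensorRight Q) c n f.op (C.opRing.obj.map f.op c) rfl n₀ hn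
    refine (hl _ _ (hr m m₀ hm₀).symm).trans (Eq.trans ?_ (hr _ _ (hl m m₀ hm₀).symm).symm)
    have h := BalancedTensor.left_right_smul (S := B.ring.obj.obj (Opposite.op Y))
      (N := P.carrier.obj.obj (Opposite.op Y)) (M := Q.carrier.obj.obj (Opposite.op Y))
      (R := A.ring.obj.obj (Opposite.op Y)) (R' := (C.ring.obj.obj (Opposite.op Y))ᵐᵒᵖ)
      (A.ring.obj.map f.op a) (op (C.ring.obj.map f.op (unop c)))
    exact congrArg (φ.app _) (h m₀)
  map_smul g a m := PresheafOfModules.Sheafify.map_smul (𝟙 A.ring.obj) (P.toTensorLeft Q) _ g a m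
  map_op_smul g c m := PresheafOfModules.Sheafify.map_smul (R := C.opRing) (𝟙 C.opRing.obj)
    (P.toTensorRight Q) _ g (op c) m
  central U k m := by
    let F := P.tensorSheaf Q
    let φ := P.toTensorSheaf Q
    refine F.isSeparated _ _ (Presheaf.imageSieve_mem (siteOf X) φ m) _ _ ?_
    rintro Y f ⟨m₀, hm₀⟩
    have hl := PresheafOfModules.Sheafify.map_smul_eq (𝟙 A.ring.obj) (P.toTensorLeft Q) (A.unit U k) m f.op
        (A.unit _ (K.obj.map f.op k)) (A.map_unit f.op k).symm m₀ hm₀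
    have hr := PresheafOfModules.Sheafify.map_smul_eq (R := C.opRing) (𝟙 C.opRing.obj) (P.toTensorRight Q) (op (C.unit U k)) m f.op
        (op (C.unit _ (K.obj.map f.op k))) (congrArg op (C.map_unit f.op k).symm) m₀ hm₀
    refine hl.trans (Eq.trans ?_ hr.symm)
    have h := BalancedTensor.left_eq_right_smul (S := B.ring.obj.obj (Opposite.op Y))
      (N := P.carrier.obj.obj (Opposite.op Y)) (M := Q.carrier.obj.obj (Opposite.op Y))
      (A.unit _ (K.obj.map f.op k)) (B.unit _ (K.obj.map f.op k))
      (op (C.unit _ (K.obj.map f.op k))) (P.central _ _) (Q.central _ _)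
    exact congrArg (φ.app _) (h m₀)

/-- The morphism of bimodules `P ⊗_B Q → T` induced by a family of balanced biadditive maps
`P(U) × Q(U) → T(U)`, compatible with restrictions and with both outer actions. -/
def tensorLift (P : Bimodule A B) (Q : Bimodule B C) (T : Bimodule A C)
    (β : ∀ U, P.carrier.obj.obj U →+ Q.carrier.obj.obj U →+ T.carrier.obj.obj U)
    (balanced : ∀ U n (s : B.ring.obj.obj U) m, β U (op s • n) m = β U n (s • m))
    (natural : ∀ (U V : (Opens X)ᵒᵖ) (g : U ⟶ V) n m, T.carrier.obj.map g (β U n m) =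
      β V (P.carrier.obj.map g n) (Q.carrier.obj.map g m))
    (left_linear : ∀ U (a : A.ring.obj.obj U) n m, β U (a • n) m = a • β U n m)
    (right_linear : ∀ U (c : C.ring.obj.obj U) n m, β U n (op c • m) = op c • β U n m) :
    P.tensor Q ⟶ T :=
  let β' : P.tensorPresheaf Q.leftModule.val ⟶ T.carrier.obj :=
    { app := fun U => AddCommGrpCat.ofHom (BalancedTensor.lift (β U) (balanced U))
      naturality := fun U V g => AddCommGrpCat.hom_ext (BalancedTensor.hom_ext
        (S := B.ring.obj.obj U) (M := Q.carrier.obj.obj U) fun n m => (natural U V g n m).symm) }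
  let φ := P.toTensorSheaf Q
  let ψ : (P.tensorSheaf Q).obj ⟶ T.carrier.obj := CategoryTheory.sheafifyLift (siteOf X) β' T.carrier.property
  have hψ : ∀ U x, ψ.app U (φ.app U x) = β'.app U x := fun U x =>
    ConcreteCategory.congr_hom (NatTrans.congr_app
      (CategoryTheory.toSheafify_sheafifyLift (siteOf X) β' T.carrier.property) U) x
  { hom := ⟨ψ⟩
    map_smul := fun U a m => by
      refine T.carrier.isSeparated _ _ (Presheaf.imageSieve_mem (siteOf X) φ m) _ _ ?_
      rintro Y f ⟨m₀, hm₀⟩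
      have hl := PresheafOfModules.Sheafify.map_smul_eq (𝟙 A.ring.obj) (P.toTensorLeft Q) a m f.op (A.ring.obj.map f.op a) rfl m₀ hm₀
      have h1 := NatTrans.naturality_apply ψ f.op (a • m : (P.tensor Q).carrier.obj.obj U)
      have h2 := NatTrans.naturality_apply ψ f.op m
      rw [T.map_smul]
      refine h1.symm.trans ((congrArg (ψ.app _) hl).trans ?_)
      refine Eq.trans ?_ (congrArg (fun t => A.ring.obj.map f.op a • t)
        ((congrArg (ψ.app _) hm₀).trans h2))
      rw [hψ]
      refine (hψ _ _).trans ?_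
      exact BalancedTensor.lift_left_smul (β _) (balanced _) _ _ (left_linear _ _) m₀
    map_op_smul := fun U c m => by
      refine T.carrier.isSeparated _ _ (Presheaf.imageSieve_mem (siteOf X) φ m) _ _ ?_
      rintro Y f ⟨m₀, hm₀⟩
      have hl := PresheafOfModules.Sheafify.map_smul_eq (R := C.opRing) (𝟙 C.opRing.obj) (P.toTensorRight Q) (op c) m f.op (op (C.ring.obj.map f.op c)) rfl m₀ hm₀
      have h1 := NatTrans.naturality_apply ψ f.op (op c • m : (P.tensor Q).carrier.obj.obj U)
      have h2 := NatTrans.naturality_apply ψ f.op m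
      rw [T.map_op_smul]
      refine h1.symm.trans ((congrArg (ψ.app _) hl).trans ?_)
      refine Eq.trans ?_ (congrArg (fun t => op (C.ring.obj.map f.op c) • t)
        ((congrArg (ψ.app _) hm₀).trans h2))
      rw [hψ]
      refine (hψ _ _).trans ?_
      exact BalancedTensor.lift_right_smul (M := Q.carrier.obj.obj _) (β _) (balanced _) _ _
        (right_linear _ _) m₀ }

/-- The section `b ⊗ c` of the tensor product of two bimodules. -/
def pure (P : Bimodule A B) (Q : Bimodule B C) {U : (Opens X)ᵒᵖ}
    (b : P.carrier.obj.obj U) (c : Q.carrier.obj.obj U) : (P.tensor Q).carrier.obj.obj U :=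
  P.tmul Q.leftModule b c

/-- The value `μ(b ⊗ c)`, as a section of `A`, of a bimodule morphism `μ : P ⊗_B Q → A`. -/
def evalPure {P : Bimodule A B} {Q : Bimodule B A} (μ : P.tensor Q ⟶ regular A)
    {U : (Opens X)ᵒᵖ} (b : P.carrier.obj.obj U) (c : Q.carrier.obj.obj U) :
    A.ring.obj.obj U :=
  μ.hom.hom.app U (pure P Q b c)

/-- The bimodules `P`, `Q` and the bimodule morphisms `μ : P ⊗_B Q → A`, `ν : Q ⊗_A P → B`
implement a Morita equivalence between `B` and `A`: `μ` and `ν` are isomorphisms, and the functors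
`P ⊗_B -` and `Q ⊗_A -` form an equivalence of the categories of modules whose unit and counit are
given by `ν` and `μ`, that is by `c ⊗ b ⊗ m ↦ ν(c ⊗ b) m` and `b ⊗ c ⊗ m ↦ μ(b ⊗ c) m`. -/
structure IsMoritaEquivalence (P : Bimodule A B) (Q : Bimodule B A)
    (μ : P.tensor Q ⟶ regular A) (ν : Q.tensor P ⟶ regular B) : Prop where
  isIso_fwd : IsIso μ
  isIso_bwd : IsIso ν
  equivalence : ∃ (η : 𝟭 (SheafOfModules.{u} B.ring) ≅ P.tensorFunctor ⋙ Q.tensorFunctor)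
    (ε : Q.tensorFunctor ⋙ P.tensorFunctor ≅ 𝟭 (SheafOfModules.{u} A.ring)),
    (∀ M, P.tensorFunctor.map (η.hom.app M) ≫ ε.hom.app (P.tensorFunctor.obj M) = 𝟙 _) ∧
    (∀ (M : SheafOfModules.{u} B.ring) (U : (Opens X)ᵒᵖ) (c : Q.carrier.obj.obj U)
      (b : P.carrier.obj.obj U) (m : M.val.obj U),
      (η.inv.app M).val.app U (Q.tmul (P.tensorFunctor.obj M) c (P.tmul M b m)) =
        evalPure ν c b • m) ∧
    (∀ (M : SheafOfModules.{u} A.ring) (U : (Opens X)ᵒᵖ) (b : P.carrier.obj.obj U)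
      (c : Q.carrier.obj.obj U) (m : M.val.obj U),
      (ε.hom.app M).val.app U (P.tmul (Q.tensorFunctor.obj M) b (Q.tmul M c m)) =
        evalPure μ b c • m)

end Bimodule

end

/-! ### Matrix algebras -/

/-- The sheaf `K`, as a sheaf of rings. -/
abbrev toRingSheaf {X : TopCat.{u}} (K : Sheaf (siteOf X) CommRingCat.{u}) :
    Sheaf (siteOf X) RingCat.{u} :=
  (sheafCompose (siteOf X) (forget₂ CommRingCat.{u} RingCat.{u})).obj K

/-- A matrix `K`-algebra `A = ⊕_{i,j=0}^q A_{ij}`, given by its entries: sheaves of `K`-modules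
`A_{ij}` with associative `K`-bilinear products `A_{ij} ⊗ A_{jl} → A_{il}` and sections `1_i` of
`A_{ii}` which act as units on all `A_{ij}` and `A_{ji}`.  The sheaf of `K`-algebras
`⊕_{i,j} A_{ij}`, with the matrix product, is `MatrixAlgebra.toAlgebra` below. -/
structure MatrixAlgebra {X : TopCat.{u}} (K : Sheaf (siteOf X) CommRingCat.{u}) (q : ℕ) where
  /-- the sheaf of `K`-modules `A_{ij}` -/
  entry (i j : Fin (q + 1)) : SheafOfModules.{u} (toRingSheaf K)
  /-- the product `A_{ij} × A_{jl} → A_{il}` -/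
  mul {i j l : Fin (q + 1)} (U : (Opens X)ᵒᵖ) :
    (entry i j).val.obj U →+ (entry j l).val.obj U →+ (entry i l).val.obj U
  smul_mul {i j l : Fin (q + 1)} (U : (Opens X)ᵒᵖ) (k : (toRingSheaf K).obj.obj U)
    (x : (entry i j).val.obj U) (y : (entry j l).val.obj U) :
    mul U (k • x) y = k • mul U x y
  mul_smul {i j l : Fin (q + 1)} (U : (Opens X)ᵒᵖ) (k : (toRingSheaf K).obj.obj U)
    (x : (entry i j).val.obj U) (y : (entry j l).val.obj U) :
    mul U x (k • y) = k • mul U x y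
  map_mul {i j l : Fin (q + 1)} {U V : (Opens X)ᵒᵖ} (g : U ⟶ V)
    (x : (entry i j).val.obj U) (y : (entry j l).val.obj U) :
    (entry i l).val.presheaf.map g (mul U x y) =
      mul V ((entry i j).val.presheaf.map g x) ((entry j l).val.presheaf.map g y)
  mul_assoc {i j l r : Fin (q + 1)} (U : (Opens X)ᵒᵖ) (x : (entry i j).val.obj U)
    (y : (entry j l).val.obj U) (z : (entry l r).val.obj U) :
    mul U (mul U x y) z = mul U x (mul U y z)
  /-- the unit of `A_{ii}` -/
  one (i : Fin (q + 1)) (U : (Opens X)ᵒᵖ) : (entry i i).val.obj U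
  map_one (i : Fin (q + 1)) {U V : (Opens X)ᵒᵖ} (g : U ⟶ V) :
    (entry i i).val.presheaf.map g (one i U) = one i V
  one_mul {i j : Fin (q + 1)} (U : (Opens X)ᵒᵖ) (x : (entry i j).val.obj U) :
    mul U (one i U) x = x
  mul_one {i j : Fin (q + 1)} (U : (Opens X)ᵒᵖ) (x : (entry i j).val.obj U) :
    mul U x (one j U) = x

namespace MatrixAlgebra

variable {X : TopCat.{u}} {K : Sheaf (siteOf X) CommRingCat.{u}} {q : ℕ}

section Rect

variable (A : MatrixAlgebra K q) {m n p o : ℕ} (r : Fin m → Fin (q + 1))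
  (s : Fin n → Fin (q + 1)) (t : Fin p → Fin (q + 1)) (v : Fin o → Fin (q + 1))

/-- Sections over `U` of `⊕_{i,j} A_{r(i) s(j)}`: matrices with `(i,j)` entry in
`A_{r(i) s(j)}(U)`. -/
def Rect (U : (Opens X)ᵒᵖ) : Type u :=
  ∀ (i : Fin m) (j : Fin n), (A.entry (r i) (s j)).val.obj U

instance (U : (Opens X)ᵒᵖ) : AddCommGroup (A.Rect r s U) :=
  inferInstanceAs (AddCommGroup (∀ (i : Fin m) (j : Fin n), (A.entry (r i) (s j)).val.obj U))

variable {A r s t v}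

@[ext] theorem Rect.ext {U : (Opens X)ᵒᵖ} {x y : A.Rect r s U} (h : ∀ i j, x i j = y i j) :
    x = y := funext fun i => funext (h i)

@[simp] theorem Rect.add_apply {U : (Opens X)ᵒᵖ} (x y : A.Rect r s U) (i j) :
    (x + y) i j = x i j + y i j := rfl

@[simp] theorem Rect.zero_apply {U : (Opens X)ᵒᵖ} (i j) : (0 : A.Rect r s U) i j = 0 := rfl

/-- Matrix multiplication `(b c)_{ij} = Σ_k b_{ik} c_{kj}`. -/
def Rect.mul {U : (Opens X)ᵒᵖ} (b : A.Rect r s U) (c : A.Rect s t U) : A.Rect r t U :=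
  fun i j => ∑ k, A.mul U (b i k) (c k j)

variable (A r) in
/-- The identity matrix. -/
def Rect.one (U : (Opens X)ᵒᵖ) : A.Rect r r U := fun i => Pi.single i (A.one (r i) U)

/-- Restriction of matrices. -/
def Rect.res {U V : (Opens X)ᵒᵖ} (g : U ⟶ V) : A.Rect r s U →+ A.Rect r s V where
  toFun x := fun i j => (A.entry (r i) (s j)).val.presheaf.map g (x i j)
  map_zero' := by ext i j; exact map_zero _
  map_add' x y := by ext i j; exact map_add _ _ _

variable {U V : (Opens X)ᵒᵖ}

theorem Rect.add_mul (b b' : A.Rect r s U) (c : A.Rect s t U) :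
    (b + b').mul c = b.mul c + b'.mul c := by
  ext i j; simp [Rect.mul, Finset.sum_add_distrib]

theorem Rect.mul_add (b : A.Rect r s U) (c c' : A.Rect s t U) :
    b.mul (c + c') = b.mul c + b.mul c' := by
  ext i j; simp [Rect.mul, Finset.sum_add_distrib]

theorem Rect.mul_assoc (b : A.Rect r s U) (c : A.Rect s t U) (d : A.Rect t v U) :
    (b.mul c).mul d = b.mul (c.mul d) := by
  ext i j
  simp only [Rect.mul, map_sum, AddMonoidHom.finsetSum_apply]
  rw [Finset.sum_comm]
  simp only [A.mul_assoc]

theorem Rect.one_mul (c : A.Rect r s U) : (Rect.one A r U).mul c = c := by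
  ext i j
  rw [Rect.mul, Finset.sum_eq_single i]
  · rw [Rect.one, Pi.single_eq_same, A.one_mul]
  · intro k _ hk
    rw [Rect.one, Pi.single_eq_of_ne hk, map_zero, AddMonoidHom.zero_apply]
  · simp

theorem Rect.mul_one (c : A.Rect r s U) : c.mul (Rect.one A s U) = c := by
  ext i j
  rw [Rect.mul, Finset.sum_eq_single j]
  · rw [Rect.one, Pi.single_eq_same, A.mul_one]
  · intro k _ hk
    rw [Rect.one, Pi.single_eq_of_ne hk.symm, map_zero]
  · simp

theorem Rect.res_mul (g : U ⟶ V) (b : A.Rect r s U) (c : A.Rect s t U) :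
    Rect.res g (b.mul c) = (Rect.res g b).mul (Rect.res g c) := by
  ext i j
  exact (map_sum _ _ _).trans (Finset.sum_congr rfl fun k _ => A.map_mul g _ _)

theorem Rect.res_one (g : U ⟶ V) : Rect.res g (Rect.one A r U) = Rect.one A r V := by
  ext i j
  change (A.entry (r i) (r j)).val.presheaf.map g
    ((Pi.single i (A.one (r i) U) : ∀ j, (A.entry (r i) (r j)).val.obj U) j) =
    (Pi.single i (A.one (r i) V) : ∀ j, (A.entry (r i) (r j)).val.obj V) j
  by_cases h : j = i
  · subst h
    rw [Pi.single_eq_same, Pi.single_eq_same, A.map_one]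
  · rw [Pi.single_eq_of_ne h, Pi.single_eq_of_ne h]
    exact map_zero _

/-- Multiplication of matrices by sections of `K`. -/
instance : Module ((toRingSheaf K).obj.obj U) (A.Rect r s U) :=
  inferInstanceAs (Module ((toRingSheaf K).obj.obj U)
    (∀ (i : Fin m) (j : Fin n), (A.entry (r i) (s j)).val.obj U))

theorem Rect.smul_mul (k : (toRingSheaf K).obj.obj U) (b : A.Rect r s U) (c : A.Rect s t U) :
    (k • b).mul c = k • b.mul c := by
  ext i j
  refine (Finset.sum_congr rfl fun l _ => A.smul_mul U k (b i l) (c l j)).trans ?_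
  exact Finset.smul_sum.symm

theorem Rect.mul_smul (k : (toRingSheaf K).obj.obj U) (b : A.Rect r s U) (c : A.Rect s t U) :
    b.mul (k • c) = k • b.mul c := by
  ext i j
  refine (Finset.sum_congr rfl fun l _ => A.mul_smul U k (b i l) (c l j)).trans ?_
  exact Finset.smul_sum.symm

theorem Rect.res_smul (g : U ⟶ V) (k : (toRingSheaf K).obj.obj U) (b : A.Rect r s U) :
    Rect.res g (k • b) = (toRingSheaf K).obj.map g k • Rect.res g b := by
  ext i j
  exact (A.entry (r i) (s j)).val.map_smul g k (b i j)

theorem Rect.zero_mul (c : A.Rect s t U) : (0 : A.Rect r s U).mul c = 0 := by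
  ext i j; simp [Rect.mul]

theorem Rect.mul_zero (b : A.Rect r s U) : b.mul (0 : A.Rect s t U) = 0 := by
  ext i j; simp [Rect.mul]

instance : Ring (A.Rect r r U) :=
  { (inferInstance : AddCommGroup (A.Rect r r U)) with
    mul := Rect.mul
    one := Rect.one A r U
    left_distrib := Rect.mul_add
    right_distrib := Rect.add_mul
    zero_mul := Rect.zero_mul
    mul_zero := Rect.mul_zero
    mul_assoc := Rect.mul_assoc
    one_mul := Rect.one_mul
    mul_one := Rect.mul_one }

theorem Rect.scalar_comm (k : (toRingSheaf K).obj.obj U) (b : A.Rect r s U) :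
    (k • Rect.one A r U).mul b = b.mul (k • Rect.one A s U) := by
  rw [Rect.smul_mul, Rect.mul_smul, Rect.one_mul, Rect.mul_one]

variable (A r s t)

/-- The scalar matrices `k • 1`. -/
def Rect.scalar (U : (Opens X)ᵒᵖ) : (toRingSheaf K).obj.obj U →+* A.Rect r r U where
  toFun k := k • Rect.one A r U
  map_one' := one_smul _ _
  map_mul' k l := by
    change (k * l) • Rect.one A r U = Rect.mul (k • Rect.one A r U) (l • Rect.one A r U)
    rw [Rect.smul_mul, Rect.mul_smul, Rect.one_mul, SemigroupAction.mul_smul]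
  map_zero' := zero_smul _ _
  map_add' k l := add_smul _ _ _

/-- The sheaf of abelian groups `⊕_{i,j} A_{r(i) s(j)}`. -/
def rectSheaf : Sheaf (siteOf X) AddCommGrpCat.{u} where
  obj :=
    { obj := fun U => AddCommGrpCat.of (A.Rect r s U)
      map := fun g => AddCommGrpCat.ofHom (Rect.res g)
      map_id := fun U => AddCommGrpCat.hom_ext (AddMonoidHom.ext fun x => Rect.ext fun i j =>
        ConcreteCategory.congr_hom ((A.entry (r i) (s j)).val.presheaf.map_id U) (x i j))
      map_comp := fun g h => AddCommGrpCat.hom_ext (AddMonoidHom.ext fun x => Rect.ext fun i j =>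
        ConcreteCategory.congr_hom ((A.entry (r i) (s j)).val.presheaf.map_comp g h) (x i j)) }
  property := by
    refine (TopCat.Presheaf.isSheaf_iff_isSheafUniqueGluing (X := X) _).2 fun ι W sf hsf => ?_
    have h : ∀ i j, ∃! x : (A.entry (r i) (s j)).val.presheaf.obj (Opposite.op (iSup W)),
        TopCat.Presheaf.IsGluing (X := X) (A.entry (r i) (s j)).val.presheaf W
          (fun a => (show A.Rect r s _ from sf a) i j) x := fun i j =>
      (TopCat.Presheaf.isSheaf_iff_isSheafUniqueGluing (X := X) _).1
        (A.entry (r i) (s j)).isSheaf W _ fun a b => congrFun (congrFun (hsf a b) i) j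
    choose x hx hx' using h
    refine ⟨(show A.Rect r s _ from x), fun a => Rect.ext fun i j => hx i j a, fun y hy => ?_⟩
    exact Rect.ext fun i j => hx' i j _ fun a => congrFun (congrFun (hy a) i) j

/-- The sheaf of `K`-algebras `⊕_{i,j} A_{r(i) r(j)}` with the matrix product. -/
def rectAlgebra : SheafAlgebra K where
  ring :=
    { obj :=
        { obj := fun U => RingCat.of (A.Rect r r U)
          map := fun g => RingCat.ofHom
            { Rect.res g with
              map_one' := Rect.res_one g
              map_mul' := Rect.res_mul g }
          map_id := fun U => RingCat.hom_ext (RingHom.ext fun x =>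
            ConcreteCategory.congr_hom ((A.rectSheaf r r).obj.map_id U) x)
          map_comp := fun g h => RingCat.hom_ext (RingHom.ext fun x =>
            ConcreteCategory.congr_hom ((A.rectSheaf r r).obj.map_comp g h) x) }
      property := (Presheaf.isSheaf_iff_isSheaf_forget _ _ (forget RingCat)).2
        ((Presheaf.isSheaf_iff_isSheaf_forget _ _ (forget AddCommGrpCat)).1
          (A.rectSheaf r r).property) }
  unit U := Rect.scalar A r U
  map_unit {U V} g k := (Rect.res_smul g _ _).trans (by rw [Rect.res_one]; rfl)
  commutes _ k a := Rect.scalar_comm (A := A) (r := r) (s := r) k a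

/-- The bimodule `⊕_{i,j} A_{r(i) s(j)}`, with actions given by matrix multiplication. -/
def rectBimodule : Bimodule (A.rectAlgebra r) (A.rectAlgebra s) where
  carrier := A.rectSheaf r s
  left U :=
    { smul := fun a b => Rect.mul (r := r) (s := r) (t := s) a b
      one_smul := Rect.one_mul
      mul_smul := Rect.mul_assoc
      smul_zero := fun a => Rect.mul_zero (A := A) (r := r) (s := r) (t := s) a
      zero_smul := fun b => Rect.zero_mul (A := A) (r := r) (s := r) (t := s) b
      smul_add := Rect.mul_add
      add_smul := Rect.add_mul }
  right U :=
    { smul := fun a b => Rect.mul (r := r) (s := s) (t := s) b a.unop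
      one_smul := Rect.mul_one
      mul_smul := fun a a' b => (Rect.mul_assoc (A := A) (r := r) (s := s) (t := s) (v := s)
        b a'.unop a.unop).symm
      smul_zero := fun a => Rect.zero_mul (A := A) (r := r) (s := s) (t := s) a.unop
      zero_smul := fun b => Rect.mul_zero (A := A) (r := r) (s := s) (t := s) b
      smul_add := fun a b b' => Rect.add_mul (A := A) (r := r) (s := s) (t := s) b b' a.unop
      add_smul := fun a a' b => Rect.mul_add (A := A) (r := r) (s := s) (t := s)
        b a.unop a'.unop }
  smul_comm U a c b := (Rect.mul_assoc (A := A) (r := r) (s := r) (t := s) (v := s)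
    a b c.unop).symm
  map_smul g a b := Rect.res_mul g a b
  map_op_smul g c b := Rect.res_mul g b c
  central _ k b := Rect.scalar_comm (A := A) (r := r) (s := s) k b

/-- The bimodule morphism
`(⊕ A_{r(i) s(j)}) ⊗ (⊕ A_{s(i) r(j)}) → ⊕ A_{r(i) r(j)}`, `(b ⊗ c)_{ij} = Σ_k b_{ik} c_{kj}`. -/
def rectPairing : (A.rectBimodule r s).tensor (A.rectBimodule s r) ⟶
    Bimodule.regular (A.rectAlgebra r) :=
  Bimodule.tensorLift _ _ _
    (fun U => AddMonoidHom.mk' (fun b => AddMonoidHom.mk'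
        (fun c => Rect.mul (A := A) (r := r) (s := s) (t := r) (U := U) b c)
        (fun c c' => Rect.mul_add _ c c'))
      (fun b b' => AddMonoidHom.ext fun c => Rect.add_mul b b' c))
    (fun _ b a c => Rect.mul_assoc (A := A) (r := r) (s := s) (t := s) (v := r) b a c)
    (fun _ _ g b c => Rect.res_mul g b c)
    (fun _ a b c => Rect.mul_assoc (A := A) (r := r) (s := r) (t := s) (v := r) a b c)
    (fun _ a b c => (Rect.mul_assoc (A := A) (r := r) (s := s) (t := r) (v := r) b c a).symm)

end Rect

/-- The sheaf of `K`-algebras `A = ⊕_{i,j=0}^q A_{ij}`. -/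
def toAlgebra (A : MatrixAlgebra K q) : SheafAlgebra K := A.rectAlgebra id

/-- The combinatorial restriction `f^♯A`, with `(f^♯A)_{ij} = A_{f(i) f(j)}`. -/
def restrict (A : MatrixAlgebra K q) {p : ℕ} (f : SimplexCategory.mk p ⟶ SimplexCategory.mk q) :
    MatrixAlgebra K p where
  entry i j := A.entry (f.toOrderHom i) (f.toOrderHom j)
  mul U := A.mul U
  smul_mul U := A.smul_mul U
  mul_smul U := A.mul_smul U
  map_mul g := A.map_mul g
  mul_assoc U := A.mul_assoc U
  one i U := A.one (f.toOrderHom i) U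
  map_one i _ _ g := A.map_one (f.toOrderHom i) g
  one_mul U := A.one_mul U
  mul_one U := A.mul_one U

section

variable (A : MatrixAlgebra K q) {p : ℕ} (f : SimplexCategory.mk p ⟶ SimplexCategory.mk q)

/-- The `(A, f^♯A)`-bimodule `A_f = ⊕_{i=0}^q ⊕_{j=0}^p A_{i f(j)}`. -/
def bimod : Bimodule A.toAlgebra (A.restrict f).toAlgebra :=
  A.rectBimodule id (fun j : Fin (p + 1) => f.toOrderHom j)

/-- The `(f^♯A, A)`-bimodule `A_f^{-1} = ⊕_{i=0}^p ⊕_{j=0}^q A_{f(i) j}`. -/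
def bimodInv : Bimodule (A.restrict f).toAlgebra A.toAlgebra :=
  A.rectBimodule (fun i : Fin (p + 1) => f.toOrderHom i) id

/-- `α⃗_f : A_f ⊗_{f^♯A} A_f^{-1} → A`, `(b ⊗ c)_{ij} = Σ_{k=0}^p b_{ik} c_{kj}`. -/
def alphaFwd : (A.bimod f).tensor (A.bimodInv f) ⟶ Bimodule.regular A.toAlgebra :=
  A.rectPairing id (fun j : Fin (p + 1) => f.toOrderHom j)

/-- `α⃖_f : A_f^{-1} ⊗_A A_f → f^♯A`, `(c ⊗ b)_{ij} = Σ_{k=0}^q c_{ik} b_{kj}`. -/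
def alphaBwd : (A.bimodInv f).tensor (A.bimod f) ⟶ Bimodule.regular (A.restrict f).toAlgebra :=
  A.rectPairing (fun j : Fin (p + 1) => f.toOrderHom j) id

end

/-- Each `A_{ij}` is locally free of rank one as a left `A_{ii}`-module and as a right
`A_{jj}`-module: near every point there is a section `u` of `A_{ij}` such that `a ↦ a u` is an
isomorphism from `A_{ii}` (and one such that `a ↦ u a` is an isomorphism from `A_{jj}`) over a
neighbourhood. -/
def LocallyFreeRankOne (A : MatrixAlgebra K q) : Prop :=
  ∀ (i j : Fin (q + 1)) (x : X),
    (∃ (V : Opens X) (_ : x ∈ V) (u : (A.entry i j).val.obj (Opposite.op V)),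
      ∀ (W : Opens X) (g : W ⟶ V), Function.Bijective
        (fun a : (A.entry i i).val.obj (Opposite.op W) =>
          A.mul (Opposite.op W) a ((A.entry i j).val.presheaf.map g.op u))) ∧
    (∃ (V : Opens X) (_ : x ∈ V) (u : (A.entry i j).val.obj (Opposite.op V)),
      ∀ (W : Opens X) (g : W ⟶ V), Function.Bijective
        (fun a : (A.entry j j).val.obj (Opposite.op W) =>
          A.mul (Opposite.op W) ((A.entry i j).val.presheaf.map g.op u) a))

/-- A section over `U` of the sheaf `Hom_{A_{jj}}(A_{ji}, A_{jj})` of homomorphisms of left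
`A_{jj}`-modules. -/
structure DualSection (A : MatrixAlgebra K q) (i j : Fin (q + 1)) (U : Opens X) where
  /-- the component over `V ⊆ U` -/
  app (V : Opens X) (g : V ⟶ U) :
    (A.entry j i).val.obj (Opposite.op V) →+ (A.entry j j).val.obj (Opposite.op V)
  app_mul (V : Opens X) (g : V ⟶ U) (a : (A.entry j j).val.obj (Opposite.op V))
    (y : (A.entry j i).val.obj (Opposite.op V)) :
    app V g (A.mul _ a y) = A.mul _ a (app V g y)
  naturality (V W : Opens X) (g : V ⟶ U) (h : W ⟶ V)
    (y : (A.entry j i).val.obj (Opposite.op V)) :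
    app W (h ≫ g) ((A.entry j i).val.presheaf.map h.op y) =
      (A.entry j j).val.presheaf.map h.op (app V g y)

/-- For `j ≤ i` the morphism of sheaves `A_{ij} → Hom_{A_{jj}}(A_{ji}, A_{jj})`,
`x ↦ (y ↦ y x)`, given by the product `A_{ji} ⊗ A_{ij} → A_{jj}` is an isomorphism. -/
def PerfectProduct (A : MatrixAlgebra K q) : Prop :=
  ∀ (i j : Fin (q + 1)), j ≤ i → ∀ (U : Opens X) (φ : A.DualSection i j U),
    ∃! x : (A.entry i j).val.obj (Opposite.op U),
      ∀ (V : Opens X) (g : V ⟶ U) (y : (A.entry j i).val.obj (Opposite.op V)),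
        φ.app V g y = A.mul _ y ((A.entry i j).val.presheaf.map g.op x)

end MatrixAlgebra

end

/-!
The pairings `μ(b ⊗ c) = bc` and `ν(c ⊗ b) = cb` given by matrix multiplication form a Morita
context by associativity, so, as for rings, it is enough that both are surjective; for sheaves,
locally surjective. Indeed, if `1 = Σ_k μ(b_k ⊗ c_k)` locally, then `m ↦ Σ_k b_k ⊗ (c_k ⊗ m)` is a
local inverse of `b ⊗ c ⊗ m ↦ μ(b ⊗ c) m`. A sheaf tensor product is a sheafification, so a
pairing `(c ⊗ m, b) ↦ μ(b ⊗ c) m` on it is obtained by extending a morphism into the Hom sheaf.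

For surjectivity, let `u` be a local generator of `A_{ji}` as a left `A_{jj}`-module, `j ≤ i`. By
perfectness, the functional `a u ↦ a` is multiplication by some `y` in `A_{ij}`, so that
`u y = 1_j`. Writing a local generator `w` of the right `A_{ii}`-module `A_{ji}` as `b u`, one
gets `w (y u) = b (u y) u = w`, whence `y u = 1_i`. Hence any two indices `i` and `k` admit local
sections `u_i` of `A_{ik}` and `y_i` of `A_{ki}` with `u_i y_i = 1_i`, and
`1 = Σ_i (u_i E_{ik}) (y_i E_{ki})`.
-/

noncomputable section

/-! ### Pairings of presheaves and sheafification -/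

section Pairing

variable {C : Type u} [SmallCategory C]

/-- The presheaf `Hom(F, G)` of morphisms between two presheaves of abelian groups: its sections
over `U` are the morphisms from the restriction of `F` to `U` to the restriction of `G` to `U`. -/
def internalHom (F G : Cᵒᵖ ⥤ AddCommGrpCat.{u}) : Cᵒᵖ ⥤ AddCommGrpCat.{u} where
  obj U := AddCommGrpCat.of ((Over.forget U.unop).op ⋙ F ⟶ (Over.forget U.unop).op ⋙ G)
  map g := AddCommGrpCat.ofHom
    (AddMonoidHom.mk' (Functor.whiskerLeft (Over.map g.unop).op) fun _ _ => rfl)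
  map_id U := AddCommGrpCat.hom_ext (AddMonoidHom.ext fun φ =>
    ConcreteCategory.congr_hom ((presheafHom F G).map_id U) φ)
  map_comp g h := AddCommGrpCat.hom_ext (AddMonoidHom.ext fun φ =>
    ConcreteCategory.congr_hom ((presheafHom F G).map_comp g h) φ)

namespace internalHom

variable {E F G : Cᵒᵖ ⥤ AddCommGrpCat.{u}}

theorem isSheaf {J : GrothendieckTopology C} (hG : Presheaf.IsSheaf J G) :
    Presheaf.IsSheaf J (internalHom F G) :=
  (Presheaf.isSheaf_iff_isSheaf_forget J _ (forget AddCommGrpCat)).2 (Presheaf.IsSheaf.hom F G hG)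

/-- The evaluation pairing `Hom(F, G) × F → G`. -/
def eval (U : Cᵒᵖ) : (internalHom F G).obj U →+ F.obj U →+ G.obj U :=
  AddMonoidHom.mk'
    (fun φ : (Over.forget U.unop).op ⋙ F ⟶ (Over.forget U.unop).op ⋙ G =>
      (φ.app (Opposite.op (Over.mk (𝟙 U.unop)))).hom) fun _ _ => rfl

theorem map_eval {U V : Cᵒᵖ} (g : U ⟶ V) (φ : (internalHom F G).obj U) (y : F.obj U) :
    G.map g (eval U φ y) = eval V ((internalHom F G).map g φ) (F.map g y) :=
  ((ConcreteCategory.congr_hom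
    (presheafHom_map_app_op_mk_id (F := F) (G := G) g.unop φ) (F.map g y)).trans
    (NatTrans.naturality_apply (F := (Over.forget U.unop).op ⋙ F)
      (G := (Over.forget U.unop).op ⋙ G) φ
      (Over.homMk g.unop : Over.mk g.unop ⟶ Over.mk (𝟙 U.unop)).op y)).symm

variable (β : ∀ U, E.obj U →+ F.obj U →+ G.obj U)
  (natural : ∀ {U V : Cᵒᵖ} (g : U ⟶ V) x y, G.map g (β U x y) = β V (E.map g x) (F.map g y))

/-- The morphism `E → Hom(F, G)` given by a natural pairing `E × F → G`. -/
def curry : E ⟶ internalHom F G where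
  app U := AddCommGrpCat.ofHom (AddMonoidHom.mk'
    (fun x : E.obj U =>
      ({ app := fun V => AddCommGrpCat.ofHom (β _ (E.map V.unop.hom.op x))
         naturality := fun V W g => by
          ext y
          have hE : E.map W.unop.hom.op x =
              E.map g.unop.left.op (E.map V.unop.hom.op x) := by
            rw [← ConcreteCategory.comp_apply, ← E.map_comp, ← op_comp, Over.w]
          exact (congrArg (β _ · _) hE).trans (natural g.unop.left.op _ y).symm } :
        (Over.forget U.unop).op ⋙ F ⟶ (Over.forget U.unop).op ⋙ G))
    fun x x' => NatTrans.ext (funext fun V => AddCommGrpCat.hom_ext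
      ((congrArg (β _) (map_add _ x x')).trans (map_add (β _) _ _))))
  naturality U V g := AddCommGrpCat.hom_ext (AddMonoidHom.ext fun x =>
    NatTrans.ext (funext fun W => AddCommGrpCat.hom_ext (congrArg (β _)
      (ConcreteCategory.congr_hom (E.map_comp g W.unop.hom.op) x).symm)))

theorem eval_curry (U : Cᵒᵖ) (x : E.obj U) (y : F.obj U) :
    eval U ((curry β natural).app U x) y = β U x y :=
  congrArg (β U · y) (ConcreteCategory.congr_hom (E.map_id U) x)

end internalHom

section SheafifyPairing

variable {E F G : Cᵒᵖ ⥤ AddCommGrpCat.{u}} (J : GrothendieckTopology C)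
  (β : ∀ U, E.obj U →+ F.obj U →+ G.obj U)
  (natural : ∀ {U V : Cᵒᵖ} (g : U ⟶ V) x y, G.map g (β U x y) = β V (E.map g x) (F.map g y))
  (hG : Presheaf.IsSheaf J G)

/-- The extension of a natural pairing `E × F → G` with values in a sheaf to the sheafification
of `E`. -/
def sheafifyPairing (U : Cᵒᵖ) : (CategoryTheory.sheafify J E).obj U →+ F.obj U →+ G.obj U :=
  (internalHom.eval U).comp
    ((CategoryTheory.sheafifyLift J (internalHom.curry β natural)
      (internalHom.isSheaf hG)).app U).hom

theorem sheafifyPairing_toSheafify (U : Cᵒᵖ) (x : E.obj U) (y : F.obj U) :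
    sheafifyPairing J β natural hG U ((CategoryTheory.toSheafify J E).app U x) y = β U x y := by
  refine Eq.trans ?_ (internalHom.eval_curry β natural U x y)
  exact congrArg (internalHom.eval U · y) (ConcreteCategory.congr_hom (NatTrans.congr_app
    (CategoryTheory.toSheafify_sheafifyLift J _ (internalHom.isSheaf hG)) U) x)

theorem map_sheafifyPairing {U V : Cᵒᵖ} (g : U ⟶ V) (x : (CategoryTheory.sheafify J E).obj U)
    (y : F.obj U) :
    G.map g (sheafifyPairing J β natural hG U x y) =
      sheafifyPairing J β natural hG V ((CategoryTheory.sheafify J E).map g x) (F.map g y) :=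
  (internalHom.map_eval g _ y).trans (congrArg (internalHom.eval V · (F.map g y))
    (NatTrans.naturality_apply _ g x).symm)

end SheafifyPairing

end Pairing

/-! ### Tensor products of sheaves -/

theorem BalancedTensor.exists_finset {S N M : Type*} [Ring S] [AddCommGroup N] [AddCommGroup M]
    [Module Sᵐᵒᵖ N] [Module S M] (x : BalancedTensor S N M) :
    ∃ T : Finset (N × M), x = ∑ p ∈ T, tmul S p.1 p.2 := by
  obtain ⟨x, rfl⟩ := QuotientAddGroup.mk_surjective x
  obtain ⟨T, rfl⟩ := TensorProduct.exists_finset x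
  exact ⟨T, map_sum (QuotientAddGroup.mk' (balancedRel S N M)) _ _⟩

section Local

variable {X : TopCat.{u}}

theorem eq_of_locally_eq {F : (Opens X)ᵒᵖ ⥤ AddCommGrpCat.{u}} (hF : Presheaf.IsSheaf (siteOf X) F)
    {U : (Opens X)ᵒᵖ} {s t : F.obj U}
    (h : ∀ x ∈ U.unop, ∃ (V : (Opens X)ᵒᵖ) (g : U ⟶ V), x ∈ V.unop ∧ F.map g s = F.map g t) :
    s = t := by
  refine Sheaf.isSeparated ⟨F, hF⟩ U.unop (Presheaf.equalizerSieve (F := F) s t) ?_ _ _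
    fun Y f hf => hf
  intro x hx
  obtain ⟨V, g, hxV, hg⟩ := h x hx
  exact ⟨V.unop, g.unop, hg, hxV⟩

theorem isIso_of_injective_of_locally_surjective {R : Sheaf (siteOf X) RingCat.{u}}
    {M N : SheafOfModules.{u} R} (φ : M ⟶ N) (hinj : ∀ U, Function.Injective (φ.val.app U))
    (hsurj : ∀ (U : (Opens X)ᵒᵖ) (n : N.val.obj U), ∀ x ∈ U.unop,
      ∃ (V : (Opens X)ᵒᵖ) (g : U ⟶ V), x ∈ V.unop ∧
        ∃ m, φ.val.app V m = N.val.presheaf.map g n) : IsIso φ := by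
  have : IsIso ((SheafOfModules.toSheaf R).map φ) := by
    refine (Sheaf.isLocallyBijective_iff_isIso _).1
      ⟨Presheaf.isLocallyInjective_of_injective _ _ hinj, ⟨fun n x hx => ?_⟩⟩
    obtain ⟨V, g, hxV, m, hm⟩ := hsurj _ n x hx
    exact ⟨V.unop, g.unop, ⟨m, hm⟩, hxV⟩
  exact isIso_of_reflects_iso φ (SheafOfModules.toSheaf R)

theorem presheaf_map_smul {R : Sheaf (siteOf X) RingCat.{u}} (M : SheafOfModules.{u} R)
    {U V : (Opens X)ᵒᵖ} (g : U ⟶ V) (a : R.obj.obj U) (m : M.val.obj U) :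
    M.val.presheaf.map g (a • m) =
      (R.obj.map g a • M.val.presheaf.map g m : M.val.obj V) :=
  M.val.map_smul g a m

theorem app_presheaf_map {R : Sheaf (siteOf X) RingCat.{u}} {M N : SheafOfModules.{u} R}
    (φ : M ⟶ N) {U V : (Opens X)ᵒᵖ} (g : U ⟶ V) (m : M.val.obj U) :
    φ.val.app V (M.val.presheaf.map g m) = N.val.presheaf.map g (φ.val.app U m) :=
  PresheafOfModules.naturality_apply φ.val g m

end Local

namespace Bimodule

variable {X : TopCat.{u}} {K : Sheaf (siteOf X) CommRingCat.{u}} {A B : SheafAlgebra K}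

section Tensor

variable (P : Bimodule A B) (M : SheafOfModules.{u} B.ring) {U V : (Opens X)ᵒᵖ}

/-- The canonical map from the sections of the presheaf tensor product to those of the sheaf
`P ⊗_B M`. -/
def toTensor (U : (Opens X)ᵒᵖ) :
    BalancedTensor (B.ring.obj.obj U) (P.carrier.obj.obj U) (M.val.obj U) →+
      (P.tensorFunctor.obj M).val.obj U :=
  ((CategoryTheory.toSheafify (siteOf X) (P.tensorPresheaf M.val)).app U).hom

/-- The universal pairing `P(U) × M(U) → (P ⊗_B M)(U)` as a biadditive map. -/
def tmulHom (U : (Opens X)ᵒᵖ) :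
    P.carrier.obj.obj U →+ M.val.obj U →+ (P.tensorFunctor.obj M).val.obj U :=
  AddMonoidHom.mk' (fun b => AddMonoidHom.mk' (P.tmul M b) fun m m' =>
      (congrArg (P.toTensor M U) (BalancedTensor.tmul_add _ b m m')).trans (map_add _ _ _))
    fun b b' => AddMonoidHom.ext fun m =>
      (congrArg (P.toTensor M U) (BalancedTensor.add_tmul _ b b' m)).trans (map_add _ _ _)

theorem op_smul_tmul (s : B.ring.obj.obj U) (b : P.carrier.obj.obj U) (m : M.val.obj U) :
    P.tmul M (op s • b) m = P.tmul M b (s • m) :=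
  congrArg _ (BalancedTensor.smul_tmul _ b s m)

theorem smul_tmul (a : A.ring.obj.obj U) (b : P.carrier.obj.obj U) (m : M.val.obj U) :
    a • P.tmul M b m = P.tmul M (a • b) m :=
  ((PresheafOfModules.toSheafify (𝟙 A.ring.obj)
    (CategoryTheory.toSheafify (siteOf X) (P.tensorLeft M.val).presheaf)).app U).hom.map_smul a
    (BalancedTensor.tmul _ b m) |>.symm

theorem map_tmul (g : U ⟶ V) (b : P.carrier.obj.obj U) (m : M.val.obj U) :
    (P.tensorFunctor.obj M).val.presheaf.map g (P.tmul M b m) =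
      P.tmul M (P.carrier.obj.map g b) (M.val.presheaf.map g m) :=
  (NatTrans.naturality_apply (CategoryTheory.toSheafify (siteOf X) (P.tensorPresheaf M.val)) g
    (BalancedTensor.tmul _ b m)).symm

theorem tensorFunctor_map_tmul {M N : SheafOfModules.{u} B.ring} (φ : M ⟶ N)
    (b : P.carrier.obj.obj U) (m : M.val.obj U) :
    (P.tensorFunctor.map φ).val.app U (P.tmul M b m) = P.tmul N b (φ.val.app U m) :=
  (ConcreteCategory.congr_hom (NatTrans.congr_app (CategoryTheory.toSheafify_naturality (siteOf X)
    ((PresheafOfModules.toPresheaf _).map (P.tensorLeftFunctor.map φ.val))) U)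
    (BalancedTensor.tmul _ b m)).symm

variable {P M}

theorem exists_map_eq_sum_tmul (t : (P.tensorFunctor.obj M).val.obj U) {x : X}
    (hx : x ∈ U.unop) : ∃ (V : (Opens X)ᵒᵖ) (g : U ⟶ V), x ∈ V.unop ∧
      ∃ T : Finset (P.carrier.obj.obj V × M.val.obj V),
        (P.tensorFunctor.obj M).val.presheaf.map g t =
          (∑ p ∈ T, P.tmul M p.1 p.2 : (P.tensorFunctor.obj M).val.obj V) := by
  obtain ⟨V, g, ⟨s, hs⟩, hxV⟩ := Presheaf.imageSieve_mem (siteOf X)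
    (CategoryTheory.toSheafify (siteOf X) (P.tensorPresheaf M.val)) t x hx
  obtain ⟨T, rfl⟩ := BalancedTensor.exists_finset s
  exact ⟨Opposite.op V, g.op, hxV, T, hs.symm.trans (map_sum (P.toTensor M _) _ T)⟩

theorem tensor_induction {motive : ∀ U, (P.tensorFunctor.obj M).val.obj U → Prop}
    (tmul : ∀ (U : (Opens X)ᵒᵖ) (b : P.carrier.obj.obj U) (m : M.val.obj U),
      motive U (P.tmul M b m))
    (add : ∀ U s t, motive U s → motive U t → motive U (s + t))
    (glue : ∀ U (t : (P.tensorFunctor.obj M).val.obj U),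
      (∀ x ∈ U.unop, ∃ (V : (Opens X)ᵒᵖ) (g : U ⟶ V), x ∈ V.unop ∧
        motive V ((P.tensorFunctor.obj M).val.presheaf.map g t)) → motive U t)
    {U : (Opens X)ᵒᵖ} (t : (P.tensorFunctor.obj M).val.obj U) : motive U t := by
  refine glue U t fun x hx => ?_
  obtain ⟨V, g, hxV, T, hT⟩ := exists_map_eq_sum_tmul t hx
  refine ⟨V, g, hxV, ?_⟩
  rw [hT]
  refine Finset.sum_induction _ (motive V) (add V) ?_ fun p _ => tmul V p.1 p.2
  rw [← map_zero (P.tmulHom M V 0)]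
  exact tmul V 0 0

theorem tensorFunctor_hom_ext {N : SheafOfModules.{u} A.ring} {φ ψ : P.tensorFunctor.obj M ⟶ N}
    (h : ∀ (U : (Opens X)ᵒᵖ) (b : P.carrier.obj.obj U) (m : M.val.obj U),
      φ.val.app U (P.tmul M b m) = ψ.val.app U (P.tmul M b m)) : φ = ψ := by
  refine (SheafOfModules.toSheaf A.ring).map_injective (Sheaf.hom_ext
    (CategoryTheory.sheafify_hom_ext (siteOf X) _ _ N.isSheaf ?_))
  refine NatTrans.ext (funext fun U => AddCommGrpCat.hom_ext (BalancedTensor.hom_ext fun b m => ?_))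
  exact h U b m

variable {N : SheafOfModules.{u} A.ring}
  (β : ∀ U : (Opens X)ᵒᵖ, P.carrier.obj.obj U →+ M.val.obj U →+ N.val.obj U)
  (balanced : ∀ {U} b (s : B.ring.obj.obj U) m, β U (op s • b) m = β U b (s • m))
  (natural : ∀ {U V : (Opens X)ᵒᵖ} (g : U ⟶ V) b m, N.val.presheaf.map g (β U b m) =
    β V (P.carrier.obj.map g b) (M.val.presheaf.map g m))
  (linear : ∀ {U} (a : A.ring.obj.obj U) b m, β U (a • b) m = a • β U b m)

/-- The morphism of presheaves of left `A`-modules `P ⊗_B M → N` induced by a natural balanced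
pairing `P × M → N` which is `A`-linear in the first variable. -/
def tensorDescPresheaf : P.tensorLeft M.val ⟶ N.val :=
  PresheafOfModules.homMk (M₁ := P.tensorLeft M.val) (M₂ := N.val)
    { app := fun U => AddCommGrpCat.ofHom (BalancedTensor.lift (β U) balanced)
      naturality := fun U _ g => AddCommGrpCat.hom_ext (BalancedTensor.hom_ext
        (S := B.ring.obj.obj U) (M := M.val.obj U) fun b m => (natural g b m).symm) }
    fun _ a x => BalancedTensor.lift_left_smul (β _) balanced a a (linear a) x

/-- The extension of `tensorDescPresheaf` to the sheaf tensor product. -/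
def tensorDesc : P.tensorFunctor.obj M ⟶ N :=
  (PresheafOfModules.sheafificationHomEquiv (𝟙 A.ring.obj)).symm
    (tensorDescPresheaf β balanced natural linear)

theorem tensorDesc_tmul (b : P.carrier.obj.obj U) (m : M.val.obj U) :
    (tensorDesc β balanced natural linear).val.app U (P.tmul M b m) = β U b m := by
  have h := congrArg (PresheafOfModules.toPresheaf _).map
    ((PresheafOfModules.sheafificationHomEquiv (𝟙 A.ring.obj)).apply_symm_apply
      (tensorDescPresheaf β balanced natural linear))
  rw [PresheafOfModules.toPresheaf_map_sheafificationHomEquiv_def] at h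
  exact ConcreteCategory.congr_hom (NatTrans.congr_app h U) (BalancedTensor.tmul _ b m)

end Tensor

theorem tensorLift_pure {C : SheafAlgebra K} (P : Bimodule A B) (Q : Bimodule B C)
    (T : Bimodule A C)
    (β : ∀ U, P.carrier.obj.obj U →+ Q.carrier.obj.obj U →+ T.carrier.obj.obj U)
    (balanced : ∀ U n (s : B.ring.obj.obj U) m, β U (op s • n) m = β U n (s • m))
    (natural : ∀ (U V : (Opens X)ᵒᵖ) (g : U ⟶ V) n m, T.carrier.obj.map g (β U n m) =
      β V (P.carrier.obj.map g n) (Q.carrier.obj.map g m))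
    (linear : ∀ U (a : A.ring.obj.obj U) n m, β U (a • n) m = a • β U n m)
    (linear_op : ∀ U (c : C.ring.obj.obj U) n m, β U n (op c • m) = op c • β U n m)
    {U : (Opens X)ᵒᵖ} (b : P.carrier.obj.obj U) (c : Q.carrier.obj.obj U) :
    (tensorLift P Q T β balanced natural linear linear_op).hom.hom.app U (pure P Q b c) =
      β U b c :=
  ConcreteCategory.congr_hom (NatTrans.congr_app
    (CategoryTheory.toSheafify_sheafifyLift (siteOf X)
      ({ app := fun U => AddCommGrpCat.ofHom (BalancedTensor.lift (β U) (balanced U))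
         naturality := fun U V g => AddCommGrpCat.hom_ext (BalancedTensor.hom_ext
          (S := B.ring.obj.obj U) (M := Q.carrier.obj.obj U)
          fun n m => (natural U V g n m).symm) } :
        P.tensorPresheaf Q.leftModule.val ⟶ T.carrier.obj) T.carrier.property) U)
    (BalancedTensor.tmul _ b c)

section IsIso

variable {P Q : Bimodule A B} (φ : P ⟶ Q)

/-- A morphism of bimodules as a morphism of sheaves of left modules. -/
def leftModuleMap : P.leftModule ⟶ Q.leftModule where
  val := PresheafOfModules.homMk (M₁ := P.leftModule.val) (M₂ := Q.leftModule.val) φ.hom.hom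
    φ.map_smul

theorem isIso_of_isIso_leftModuleMap [IsIso (leftModuleMap φ)] : IsIso φ := by
  let ψ := inv (leftModuleMap φ)
  have hψφ : ∀ U x, ψ.val.app U (φ.hom.hom.app U x) = x := fun U x =>
    ConcreteCategory.congr_hom (NatTrans.congr_app
      (congrArg (fun f => ((SheafOfModules.toSheaf _).map f).hom)
        (IsIso.hom_inv_id (leftModuleMap φ))) U) x
  have hφψ : ∀ U y, φ.hom.hom.app U (ψ.val.app U y) = y := fun U y =>
    ConcreteCategory.congr_hom (NatTrans.congr_app
      (congrArg (fun f => ((SheafOfModules.toSheaf _).map f).hom)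
        (IsIso.inv_hom_id (leftModuleMap φ))) U) y
  have hinj : ∀ U, Function.Injective (φ.hom.hom.app U) := fun U =>
    Function.LeftInverse.injective (hψφ U)
  refine ⟨⟨(SheafOfModules.toSheaf _).map ψ, fun U a y => ?_, fun U a y => ?_⟩, ?_, ?_⟩
  · exact (ψ.val.app U).hom.map_smul a y
  · exact hinj U ((hφψ U _).trans ((φ.map_op_smul U a _).trans (congrArg _ (hφψ U y))).symm)
  · exact Hom.ext (Sheaf.hom_ext (NatTrans.ext (funext fun U => AddCommGrpCat.hom_ext
      (AddMonoidHom.ext (hψφ U)))))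
  · exact Hom.ext (Sheaf.hom_ext (NatTrans.ext (funext fun U => AddCommGrpCat.hom_ext
      (AddMonoidHom.ext (hφψ U)))))

end IsIso

variable {P : Bimodule A B} {Q : Bimodule B A} {U V : (Opens X)ᵒᵖ}

section EvalPure

variable (μ : P.tensor Q ⟶ regular A)

/-- The maps `μ : (P ⊗_B Q)(U) → A(U)` with source and target seen as sections of the left module
`P ⊗_B Q` and of the ring `A`, so that the module and ring operations apply to them. -/
def tensorEval (U : (Opens X)ᵒᵖ) :
    (P.tensorFunctor.obj Q.leftModule).val.obj U →+ A.ring.obj.obj U :=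
  (μ.hom.hom.app U).hom

theorem map_tensorEval (g : U ⟶ V) (t : (P.tensorFunctor.obj Q.leftModule).val.obj U) :
    A.ring.obj.map g (tensorEval μ U t) =
      tensorEval μ V ((P.tensorFunctor.obj Q.leftModule).val.presheaf.map g t) :=
  (NatTrans.naturality_apply μ.hom.hom g t).symm

/-- The pairing `(b, c) ↦ μ(b ⊗ c)` as a biadditive map. -/
def evalPureHom (U : (Opens X)ᵒᵖ) :
    P.carrier.obj.obj U →+ Q.carrier.obj.obj U →+ A.ring.obj.obj U :=
  (AddMonoidHom.compHom (tensorEval μ U)).comp (P.tmulHom Q.leftModule U)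

theorem evalPure_op_smul_left (b : P.carrier.obj.obj U) (s : B.ring.obj.obj U)
    (c : Q.carrier.obj.obj U) : evalPure μ (op s • b) c = evalPure μ b (s • c) :=
  congrArg (μ.hom.hom.app U) (P.op_smul_tmul Q.leftModule s b c)

theorem evalPure_smul (a : A.ring.obj.obj U) (b : P.carrier.obj.obj U)
    (c : Q.carrier.obj.obj U) : evalPure μ (a • b) c = a * evalPure μ b c :=
  (congrArg (μ.hom.hom.app U) (P.smul_tmul Q.leftModule a b c).symm).trans
    (μ.map_smul U a (pure P Q b c))

theorem op_smul_pure (a : A.ring.obj.obj U) (b : P.carrier.obj.obj U)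
    (c : Q.carrier.obj.obj U) : op a • pure P Q b c = pure P Q b (op a • c) :=
  ((PresheafOfModules.toSheafify (R := A.opRing) (𝟙 A.opRing.obj)
    (P.toTensorRight Q)).app U).hom.map_smul (op a) (BalancedTensor.tmul _ b c) |>.symm

theorem evalPure_op_smul (a : A.ring.obj.obj U) (b : P.carrier.obj.obj U)
    (c : Q.carrier.obj.obj U) : evalPure μ b (op a • c) = evalPure μ b c * a :=
  (congrArg (μ.hom.hom.app U) (op_smul_pure a b c).symm).trans
    (μ.map_op_smul U a (pure P Q b c))

theorem map_evalPure (g : U ⟶ V) (b : P.carrier.obj.obj U) (c : Q.carrier.obj.obj U) :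
    A.ring.obj.map g (evalPure μ b c) =
      evalPure μ (P.carrier.obj.map g b) (Q.carrier.obj.map g c) :=
  (map_tensorEval μ g _).trans (congrArg (tensorEval μ V) (P.map_tmul Q.leftModule g b c))

end EvalPure

section Act

variable (μ : P.tensor Q ⟶ regular A)

/-- The pairing `(c ⊗ m, b) ↦ μ(b ⊗ c) m` on the presheaf tensor product. -/
def presheafAct (M : SheafOfModules.{u} A.ring) (U : (Opens X)ᵒᵖ) :
    BalancedTensor (A.ring.obj.obj U) (Q.carrier.obj.obj U) (M.val.obj U) →+
      P.carrier.obj.obj U →+ M.val.obj U :=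
  BalancedTensor.lift
    (AddMonoidHom.mk' (fun c => AddMonoidHom.mk'
        (fun m => ((smulAddHom (A.ring.obj.obj U) (M.val.obj U)).flip m).comp
          ((evalPureHom μ U).flip c))
        fun _ _ => AddMonoidHom.ext fun _ => smul_add _ _ _)
      fun c c' => AddMonoidHom.ext fun m => AddMonoidHom.ext fun b =>
        (congrArg (· • m) (map_add (evalPureHom μ U b) c c')).trans (add_smul _ _ m))
    fun c a m => AddMonoidHom.ext fun b =>
      (congrArg (· • m) (evalPure_op_smul μ a b c)).trans (mul_smul _ a m)

variable {M N : SheafOfModules.{u} A.ring}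

theorem map_presheafAct (g : U ⟶ V) (t : (Q.tensorPresheaf M.val).obj U)
    (b : P.carrier.obj.obj U) :
    M.val.presheaf.map g (presheafAct μ M U t b) =
      presheafAct μ M V ((Q.tensorPresheaf M.val).map g t) (P.carrier.obj.map g b) :=
  DFunLike.congr_fun (BalancedTensor.hom_ext
    (f := (M.val.presheaf.map g).hom.comp ((presheafAct μ M U).flip b))
    (g := ((presheafAct μ M V).flip (P.carrier.obj.map g b)).comp
      ((Q.tensorPresheaf M.val).map g).hom)
    fun c m => (presheaf_map_smul M g _ m).trans (congrArg (· • _) (map_evalPure μ g b c))) t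

variable (M) in
/-- The pairing `(Q ⊗_A M) × P → M`, `(c ⊗ m, b) ↦ μ(b ⊗ c) m`. -/
def act (U : (Opens X)ᵒᵖ) :
    (Q.tensorFunctor.obj M).val.obj U →+ P.carrier.obj.obj U →+ M.val.obj U :=
  sheafifyPairing (E := Q.tensorPresheaf M.val) (F := P.carrier.obj) (G := M.val.presheaf)
    (siteOf X) (presheafAct μ M) (map_presheafAct μ) M.isSheaf U

theorem act_tmul (c : Q.carrier.obj.obj U) (m : M.val.obj U) (b : P.carrier.obj.obj U) :
    act μ M U (Q.tmul M c m) b = evalPure μ b c • m :=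
  sheafifyPairing_toSheafify (G := M.val.presheaf) (siteOf X) _ (map_presheafAct μ) M.isSheaf U
    (BalancedTensor.tmul _ c m) b

theorem map_act (g : U ⟶ V) (t : (Q.tensorFunctor.obj M).val.obj U) (b : P.carrier.obj.obj U) :
    M.val.presheaf.map g (act μ M U t b) =
      act μ M V ((Q.tensorFunctor.obj M).val.presheaf.map g t) (P.carrier.obj.map g b) :=
  map_sheafifyPairing (G := M.val.presheaf) (siteOf X) _ (map_presheafAct μ) M.isSheaf g t b

theorem act_op_smul (t : (Q.tensorFunctor.obj M).val.obj U) (s : B.ring.obj.obj U)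
    (b : P.carrier.obj.obj U) : act μ M U t (op s • b) = act μ M U (s • t) b := by
  induction t using tensor_induction with
  | tmul U c m =>
    rw [act_tmul, smul_tmul, act_tmul, evalPure_op_smul_left]
  | add U t t' ht ht' => rw [smul_add, map_add, map_add, AddMonoidHom.add_apply, ht, ht',
      AddMonoidHom.add_apply]
  | glue U t h =>
    refine eq_of_locally_eq M.isSheaf fun x hx => ?_
    obtain ⟨V, g, hxV, h⟩ := h x hx
    refine ⟨V, g, hxV, ?_⟩
    rw [map_act, map_act, P.map_op_smul, h, presheaf_map_smul]
    rfl

theorem act_smul (t : (Q.tensorFunctor.obj M).val.obj U) (a : A.ring.obj.obj U)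
    (b : P.carrier.obj.obj U) : act μ M U t (a • b) = a • act μ M U t b := by
  induction t using tensor_induction with
  | tmul U c m => rw [act_tmul, act_tmul, evalPure_smul, mul_smul]
  | add U t t' ht ht' => simp only [map_add, AddMonoidHom.add_apply, ht, ht', smul_add]
  | glue U t h =>
    refine eq_of_locally_eq M.isSheaf fun x hx => ?_
    obtain ⟨V, g, hxV, h⟩ := h x hx
    refine ⟨V, g, hxV, ?_⟩
    rw [map_act, P.map_smul, h, presheaf_map_smul, map_act]
    rfl

theorem map_act_tensorFunctor_map (φ : M ⟶ N) (t : (Q.tensorFunctor.obj M).val.obj U)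
    (b : P.carrier.obj.obj U) :
    φ.val.app U (act μ M U t b) = act μ N U ((Q.tensorFunctor.map φ).val.app U t) b := by
  induction t using tensor_induction with
  | tmul U c m => rw [act_tmul, tensorFunctor_map_tmul, act_tmul, _root_.map_smul]
  | add U t t' ht ht' => simp only [map_add, AddMonoidHom.add_apply, ht, ht']
  | glue U t h =>
    refine eq_of_locally_eq N.isSheaf fun x hx => ?_
    obtain ⟨V, g, hxV, h⟩ := h x hx
    refine ⟨V, g, hxV, ?_⟩
    rw [← app_presheaf_map, map_act, h, map_act, app_presheaf_map]

/-- The candidate counit `P ⊗_B (Q ⊗_A M) → M`, `b ⊗ c ⊗ m ↦ μ(b ⊗ c) m`. -/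
def counitHom (M : SheafOfModules.{u} A.ring) :
    P.tensorFunctor.obj (Q.tensorFunctor.obj M) ⟶ M :=
  tensorDesc (fun U => (act μ M U).flip) (fun b s t => act_op_smul μ t s b)
    (fun g b t => map_act μ g t b) fun a b t => act_smul μ t a b

theorem counitHom_tmul (b : P.carrier.obj.obj U) (t : (Q.tensorFunctor.obj M).val.obj U) :
    (counitHom μ M).val.app U (P.tmul _ b t) = act μ M U t b :=
  tensorDesc_tmul _ _ _ _ b t

theorem counitHom_tmul_tmul (b : P.carrier.obj.obj U) (c : Q.carrier.obj.obj U)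
    (m : M.val.obj U) :
    (counitHom μ M).val.app U (P.tmul _ b (Q.tmul M c m)) = evalPure μ b c • m := by
  rw [counitHom_tmul, act_tmul]

theorem counitHom_naturality (φ : M ⟶ N) :
    P.tensorFunctor.map (Q.tensorFunctor.map φ) ≫ counitHom μ N = counitHom μ M ≫ φ := by
  refine tensorFunctor_hom_ext fun U b t => ?_
  change (counitHom μ N).val.app U ((P.tensorFunctor.map _).val.app U (P.tmul _ b t)) =
    φ.val.app U ((counitHom μ M).val.app U (P.tmul _ b t))
  rw [tensorFunctor_map_tmul, counitHom_tmul, counitHom_tmul, map_act_tensorFunctor_map]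

end Act

theorem exists_sum_evalPure_eq_one (μ : P.tensor Q ⟶ regular A) [Sheaf.IsLocallySurjective μ.hom]
    {x : X} (hx : x ∈ U.unop) : ∃ (V : (Opens X)ᵒᵖ) (_ : U ⟶ V), x ∈ V.unop ∧
      ∃ T : Finset (P.carrier.obj.obj V × Q.carrier.obj.obj V),
        ∑ p ∈ T, evalPure μ p.1 p.2 = 1 := by
  obtain ⟨V, g, ⟨t, ht⟩, hxV⟩ := Presheaf.imageSieve_mem (siteOf X) μ.hom.hom
    (1 : A.ring.obj.obj U) x hx
  obtain ⟨W, h, hxW, T, hT⟩ :=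
    exists_map_eq_sum_tmul (P := P) (M := Q.leftModule) (U := Opposite.op V) t hxV
  refine ⟨W, g.op ≫ h, hxW, T, ?_⟩
  calc ∑ p ∈ T, evalPure μ p.1 p.2
    _ = tensorEval μ W (∑ p ∈ T, P.tmul Q.leftModule p.1 p.2) := (map_sum _ _ _).symm
    _ = A.ring.obj.map h (tensorEval μ _ t) :=
      (congrArg _ hT.symm).trans (map_tensorEval μ h t).symm
    _ = A.ring.obj.map h (A.ring.obj.map g.op 1) := congrArg (A.ring.obj.map h) ht
    _ = 1 := by rw [map_one, map_one]

theorem isLocallySurjective_of_one_mem_range_tensorEval (μ : P.tensor Q ⟶ regular A)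
    (h : ∀ (U : (Opens X)ᵒᵖ), ∀ x ∈ U.unop,
      ∃ (V : (Opens X)ᵒᵖ) (_ : U ⟶ V), x ∈ V.unop ∧ 1 ∈ (tensorEval μ V).range) :
    Sheaf.IsLocallySurjective μ.hom := by
  refine ⟨fun {U} a x hx => ?_⟩
  obtain ⟨V, g, hxV, t, ht⟩ := h (Opposite.op U) x hx
  let a' : A.ring.obj.obj V := A.ring.obj.map g a
  refine ⟨V.unop, g.unop, ⟨a' • t, ?_⟩, hxV⟩
  calc tensorEval μ V (a' • t)
    _ = a' * tensorEval μ V t := μ.map_smul V a' t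
    _ = a' := by rw [ht, mul_one]

variable {μ : P.tensor Q ⟶ regular A} {ν : Q.tensor P ⟶ regular B}

/-- Compatibility of the pairings `μ : P ⊗_B Q → A` and `ν : Q ⊗_A P → B` which makes
`(A, B, P, Q, μ, ν)` a Morita context: `ν(c ⊗ b) c' = c μ(b ⊗ c')` and
`μ(b ⊗ c) b' = b ν(c ⊗ b')`. -/
structure IsMoritaContext (μ : P.tensor Q ⟶ regular A) (ν : Q.tensor P ⟶ regular B) : Prop where
  evalPure_smul_left (U : (Opens X)ᵒᵖ) (c : Q.carrier.obj.obj U) (b : P.carrier.obj.obj U)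
    (c' : Q.carrier.obj.obj U) : evalPure ν c b • c' = op (evalPure μ b c') • c
  evalPure_smul_right (U : (Opens X)ᵒᵖ) (b : P.carrier.obj.obj U) (c : Q.carrier.obj.obj U)
    (b' : P.carrier.obj.obj U) : evalPure μ b c • b' = op (evalPure ν c b') • b

namespace IsMoritaContext

theorem symm (h : IsMoritaContext μ ν) : IsMoritaContext ν μ :=
  ⟨h.evalPure_smul_right, h.evalPure_smul_left⟩

theorem evalPure_smul_eq_tmul_act (h : IsMoritaContext μ ν) (M : SheafOfModules.{u} A.ring)
    (c : Q.carrier.obj.obj U) (b : P.carrier.obj.obj U) (t : (Q.tensorFunctor.obj M).val.obj U) :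
    evalPure ν c b • t = Q.tmul M c (act μ M U t b) := by
  induction t using tensor_induction with
  | tmul U c' m => rw [smul_tmul, act_tmul, h.evalPure_smul_left, op_smul_tmul]
  | add U t t' ht ht' =>
    rw [smul_add, ht, ht', map_add, AddMonoidHom.add_apply]
    exact (map_add (Q.tmulHom M U c) _ _).symm
  | glue U t hloc =>
    refine eq_of_locally_eq (Q.tensorFunctor.obj M).isSheaf fun x hx => ?_
    obtain ⟨V, g, hxV, hV⟩ := hloc x hx
    refine ⟨V, g, hxV, ?_⟩
    rw [presheaf_map_smul, map_evalPure]
    refine (hV _ _).trans ?_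
    rw [map_tmul, map_act]

theorem act_tensorFunctor_obj (h : IsMoritaContext μ ν) (M : SheafOfModules.{u} A.ring)
    (t : (P.tensorFunctor.obj (Q.tensorFunctor.obj M)).val.obj U) (c : Q.carrier.obj.obj U) :
    act ν (Q.tensorFunctor.obj M) U t c = Q.tmul M c ((counitHom μ M).val.app U t) := by
  induction t using tensor_induction with
  | tmul U b t => rw [act_tmul, counitHom_tmul, h.evalPure_smul_eq_tmul_act]
  | add U t t' ht ht' =>
    rw [map_add, AddMonoidHom.add_apply, ht, ht', map_add]
    exact (map_add (Q.tmulHom M U c) _ _).symm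
  | glue U t hloc =>
    refine eq_of_locally_eq (Q.tensorFunctor.obj M).isSheaf fun x hx => ?_
    obtain ⟨V, g, hxV, hV⟩ := hloc x hx
    refine ⟨V, g, hxV, ?_⟩
    rw [map_act, hV, map_tmul, app_presheaf_map]

theorem act_leftModule (h : IsMoritaContext μ ν) (t : (P.tensorFunctor.obj Q.leftModule).val.obj U)
    (c : Q.carrier.obj.obj U) :
    act ν Q.leftModule U t c = op (tensorEval μ U t) • c := by
  induction t using tensor_induction with
  | tmul U b c' => exact (act_tmul ν b c' c).trans (h.evalPure_smul_left U c b c')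
  | add U t t' ht ht' =>
    rw [map_add, AddMonoidHom.add_apply, ht, ht', map_add]
    exact (add_smul (op (tensorEval μ U t)) (op (tensorEval μ U t')) c).symm
  | glue U t hloc =>
    refine eq_of_locally_eq Q.leftModule.isSheaf fun x hx => ?_
    obtain ⟨V, g, hxV, hV⟩ := hloc x hx
    refine ⟨V, g, hxV, ?_⟩
    rw [map_act, hV, ← map_tensorEval]
    exact (Q.map_op_smul g _ c).symm

theorem counitHom_tensorFunctor_obj (h : IsMoritaContext μ ν) (M : SheafOfModules.{u} A.ring) :
    counitHom ν (Q.tensorFunctor.obj M) = Q.tensorFunctor.map (counitHom μ M) :=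
  tensorFunctor_hom_ext fun U c t => by
    rw [counitHom_tmul, tensorFunctor_map_tmul, h.act_tensorFunctor_obj]

/-- A local expression `1 = Σ μ(b_k ⊗ c_k)` makes `m ↦ Σ b_k ⊗ ρ(c_k, m)` a local inverse of `φ`. -/
theorem isIso_of_act_eq [Sheaf.IsLocallySurjective μ.hom] (h : IsMoritaContext μ ν)
    {N : SheafOfModules.{u} B.ring} {M : SheafOfModules.{u} A.ring} (φ : P.tensorFunctor.obj N ⟶ M)
    (ρ : ∀ U : (Opens X)ᵒᵖ, Q.carrier.obj.obj U → M.val.obj U → N.val.obj U)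
    (act_eq : ∀ U t c, act ν N U t c = ρ U c (φ.val.app U t))
    (app_tmul : ∀ U b c m, φ.val.app U (P.tmul N b (ρ U c m)) = evalPure μ b c • m) :
    IsIso φ := by
  refine isIso_of_injective_of_locally_surjective φ (fun U t t' htt' => ?_) fun U m x hx => ?_
  · refine eq_of_locally_eq (P.tensorFunctor.obj N).isSheaf fun x hx => ?_
    obtain ⟨V, g, hxV, T, hT⟩ := exists_sum_evalPure_eq_one μ hx
    have expand (t : (P.tensorFunctor.obj N).val.obj V) :
        t = ∑ p ∈ T, P.tmul N p.1 (ρ V p.2 (φ.val.app V t)) := calc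
      t = (∑ p ∈ T, evalPure μ p.1 p.2) • t := by rw [hT, one_smul]
      _ = ∑ p ∈ T, evalPure μ p.1 p.2 • t := Finset.sum_smul
      _ = _ := Finset.sum_congr rfl fun p _ => by
        rw [h.symm.evalPure_smul_eq_tmul_act, act_eq]
    refine ⟨V, g, hxV, (expand _).trans (Eq.trans ?_ (expand _).symm)⟩
    rw [app_presheaf_map, app_presheaf_map, htt']
  · obtain ⟨V, g, hxV, T, hT⟩ := exists_sum_evalPure_eq_one μ hx
    have app_sum (n : M.val.obj V) : φ.val.app V (∑ p ∈ T, P.tmul N p.1 (ρ V p.2 n)) = n := by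
      rw [map_sum, Finset.sum_congr rfl fun p _ => app_tmul V p.1 p.2 n, ← Finset.sum_smul, hT,
        one_smul]
    exact ⟨V, g, hxV, _, app_sum _⟩

theorem isIso_counitHom [Sheaf.IsLocallySurjective μ.hom] (h : IsMoritaContext μ ν)
    (M : SheafOfModules.{u} A.ring) : IsIso (counitHom μ M) :=
  h.isIso_of_act_eq _ (fun _ c m => Q.tmul M c m) (fun _ t c => h.act_tensorFunctor_obj M t c)
    fun _ b c m => counitHom_tmul_tmul μ b c m

theorem isIso [Sheaf.IsLocallySurjective μ.hom] (h : IsMoritaContext μ ν) : IsIso μ := by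
  have : IsIso (leftModuleMap μ) :=
    h.isIso_of_act_eq (N := Q.leftModule) _ (fun U c (a : A.ring.obj.obj U) => op a • c)
      (fun _ t c => h.act_leftModule t c) fun _ b c a => evalPure_op_smul μ a b c
  exact isIso_of_isIso_leftModuleMap μ

/-- The natural isomorphism with components `counitHom μ M`. -/
def counitIso [Sheaf.IsLocallySurjective μ.hom] (h : IsMoritaContext μ ν) :
    Q.tensorFunctor ⋙ P.tensorFunctor ≅ 𝟭 (SheafOfModules.{u} A.ring) :=
  NatIso.ofComponents (fun M => have := h.isIso_counitHom M; asIso (counitHom μ M))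
    (counitHom_naturality μ)

theorem isMoritaEquivalence [Sheaf.IsLocallySurjective μ.hom] [Sheaf.IsLocallySurjective ν.hom]
    (h : IsMoritaContext μ ν) : IsMoritaEquivalence P Q μ ν where
  isIso_fwd := h.isIso
  isIso_bwd := h.symm.isIso
  equivalence := by
    refine ⟨h.symm.counitIso.symm, h.counitIso, fun M => ?_,
      fun M U c b m => counitHom_tmul_tmul ν c b m, fun M U b c m => counitHom_tmul_tmul μ b c m⟩
    have := h.symm.isIso_counitHom M
    change P.tensorFunctor.map (inv (counitHom ν M)) ≫ counitHom μ (P.tensorFunctor.obj M) = 𝟙 _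
    rw [h.symm.counitHom_tensorFunctor_obj, ← Functor.map_comp, IsIso.inv_hom_id,
      CategoryTheory.Functor.map_id]

end IsMoritaContext

end Bimodule

/-! ### Generators of the entries of a matrix algebra -/

namespace MatrixAlgebra

variable {X : TopCat.{u}} {K : Sheaf (siteOf X) CommRingCat.{u}} {q : ℕ} (A : MatrixAlgebra K q)

section LocalInverse

variable {i j : Fin (q + 1)} {V : Opens X} (u : (A.entry j i).val.obj (Opposite.op V))
  (hu : ∀ (W : Opens X) (g : W ⟶ V), Function.Bijective
    (fun a : (A.entry j j).val.obj (Opposite.op W) =>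
      A.mul (Opposite.op W) a ((A.entry j i).val.presheaf.map g.op u)))

/-- The isomorphism `a ↦ a u` of left `A_{jj}`-modules from `A_{jj}` to `A_{ji}` given by a
generator `u` of the latter. -/
def mulGeneratorEquiv (W : Opens X) (g : W ⟶ V) :
    (A.entry j j).val.obj (Opposite.op W) ≃+ (A.entry j i).val.obj (Opposite.op W) :=
  AddEquiv.ofBijective ((A.mul (Opposite.op W)).flip ((A.entry j i).val.presheaf.map g.op u))
    (hu W g)

/-- The dual of a generator `u` of the left `A_{jj}`-module `A_{ji}`: it takes `a u` to `a`. -/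
def dualOfGenerator : A.DualSection i j V where
  app W g := (A.mulGeneratorEquiv u hu W g).symm
  app_mul W g a y := by
    obtain ⟨a', rfl⟩ := (A.mulGeneratorEquiv u hu W g).surjective y
    refine (AddEquiv.symm_apply_eq _).2 ?_
    rw [AddMonoidHom.coe_coe, AddEquiv.symm_apply_apply]
    exact (A.mul_assoc _ _ _ _).symm
  naturality W W' g h y := by
    obtain ⟨a', rfl⟩ := (A.mulGeneratorEquiv u hu W g).surjective y
    refine (AddEquiv.symm_apply_eq _).2 ?_
    rw [AddMonoidHom.coe_coe, AddEquiv.symm_apply_apply]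
    refine (A.map_mul h.op _ _).trans (congrArg _ ?_)
    exact (ConcreteCategory.congr_hom ((A.entry j i).val.presheaf.map_comp g.op h.op) u).symm

theorem dualOfGenerator_app_self {W : Opens X} (g : W ⟶ V) :
    (A.dualOfGenerator u hu).app W g ((A.entry j i).val.presheaf.map g.op u) =
      A.one j (Opposite.op W) :=
  (AddEquiv.symm_apply_eq _).2 (A.one_mul _ _).symm

end LocalInverse

variable {A}

theorem exists_local_inverse_of_le (hfree : A.LocallyFreeRankOne) (hperf : A.PerfectProduct)
    {i j : Fin (q + 1)} (hij : j ≤ i) (x : X) :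
    ∃ (V : Opens X) (_ : x ∈ V) (u : (A.entry j i).val.obj (Opposite.op V))
      (y : (A.entry i j).val.obj (Opposite.op V)),
      A.mul _ u y = A.one j _ ∧ A.mul _ y u = A.one i _ := by
  obtain ⟨V₁, hx₁, u₁, hu₁⟩ := (hfree j i x).1
  obtain ⟨V₂, hx₂, w₂, hw₂⟩ := (hfree j i x).2
  obtain ⟨y₁, hy₁, -⟩ := hperf i j hij V₁ (A.dualOfGenerator u₁ hu₁)
  let g₁ : V₁ ⊓ V₂ ⟶ V₁ := Opens.infLELeft V₁ V₂
  let g₂ : V₁ ⊓ V₂ ⟶ V₂ := Opens.infLERight V₁ V₂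
  let u : (A.entry j i).val.obj (Opposite.op (V₁ ⊓ V₂)) := (A.entry j i).val.presheaf.map g₁.op u₁
  let y : (A.entry i j).val.obj (Opposite.op (V₁ ⊓ V₂)) := (A.entry i j).val.presheaf.map g₁.op y₁
  let w : (A.entry j i).val.obj (Opposite.op (V₁ ⊓ V₂)) := (A.entry j i).val.presheaf.map g₂.op w₂
  have huy : A.mul _ u y = A.one j _ :=
    (hy₁ _ g₁ u).symm.trans (A.dualOfGenerator_app_self u₁ hu₁ g₁)
  obtain ⟨b, hb⟩ : ∃ b, A.mul _ b u = w := (hu₁ _ g₁).2 w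
  have hw : A.mul _ w (A.mul _ y u) = A.mul _ w (A.one i _) := by
    rw [A.mul_one, ← hb, A.mul_assoc, ← A.mul_assoc _ u y u, huy, A.one_mul]
  exact ⟨V₁ ⊓ V₂, ⟨hx₁, hx₂⟩, u, y, huy, (hw₂ _ g₂).1 hw⟩

theorem exists_local_inverse (hfree : A.LocallyFreeRankOne) (hperf : A.PerfectProduct)
    (i j : Fin (q + 1)) (x : X) :
    ∃ (V : Opens X) (_ : x ∈ V) (u : (A.entry i j).val.obj (Opposite.op V))
      (y : (A.entry j i).val.obj (Opposite.op V)), A.mul _ u y = A.one i _ := by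
  rcases le_total i j with hij | hji
  · obtain ⟨V, hx, u, y, huy, -⟩ := exists_local_inverse_of_le hfree hperf hij x
    exact ⟨V, hx, u, y, huy⟩
  · obtain ⟨V, hx, u, y, -, hyu⟩ := exists_local_inverse_of_le hfree hperf hji x
    exact ⟨V, hx, y, u, hyu⟩

variable {l m n : ℕ}

section Single

variable (r : Fin m → Fin (q + 1)) (s : Fin n → Fin (q + 1)) (t : Fin l → Fin (q + 1))
  {U : (Opens X)ᵒᵖ}

/-- The matrix whose only non-zero entry is `a`, in the place `(i, j)`. -/
def Rect.single (i : Fin m) (j : Fin n) (a : (A.entry (r i) (s j)).val.obj U) : A.Rect r s U :=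
  Pi.single i (Pi.single j a)

variable {r s t}

@[simp]
theorem Rect.single_apply_same (i : Fin m) (j : Fin n) (a : (A.entry (r i) (s j)).val.obj U) :
    Rect.single r s i j a i j = a := by
  rw [Rect.single, Pi.single_eq_same, Pi.single_eq_same]

theorem Rect.single_apply_of_ne_left {i i' : Fin m} (h : i' ≠ i) (j j' : Fin n)
    (a : (A.entry (r i) (s j)).val.obj U) : Rect.single r s i j a i' j' = 0 := by
  rw [Rect.single, Pi.single_eq_of_ne h, Pi.zero_apply]

theorem Rect.single_apply_of_ne_right (i i' : Fin m) {j j' : Fin n} (h : j' ≠ j)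
    (a : (A.entry (r i) (s j)).val.obj U) : Rect.single r s i j a i' j' = 0 := by
  obtain rfl | hi := eq_or_ne i' i
  · rw [Rect.single, Pi.single_eq_same, Pi.single_eq_of_ne h]
  · exact Rect.single_apply_of_ne_left hi j j' a

theorem Rect.single_mul_single (i : Fin m) (j : Fin n) (k : Fin l)
    (a : (A.entry (r i) (s j)).val.obj U) (b : (A.entry (s j) (t k)).val.obj U) :
    (Rect.single r s i j a).mul (Rect.single s t j k b) = Rect.single r t i k (A.mul U a b) := by
  ext i' k'
  rw [Rect.mul, Finset.sum_eq_single j (fun j' _ hj => by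
    rw [Rect.single_apply_of_ne_right i i' hj, map_zero, AddMonoidHom.zero_apply]) (by simp)]
  obtain rfl | hi := eq_or_ne i' i
  · obtain rfl | hk := eq_or_ne k' k
    · simp only [Rect.single_apply_same]
    · rw [Rect.single_apply_of_ne_right _ _ hk, Rect.single_apply_of_ne_right _ _ hk, map_zero]
  · rw [Rect.single_apply_of_ne_left hi, Rect.single_apply_of_ne_left hi, map_zero,
      AddMonoidHom.zero_apply]

variable (r) in
theorem Rect.sum_single_one :
    ∑ i, Rect.single r r i i (A.one (r i) U) = Rect.one A r U :=
  Finset.univ_sum_single _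

end Single

variable (r : Fin m → Fin (q + 1)) (s : Fin n → Fin (q + 1))

theorem evalPure_rectPairing {U : (Opens X)ᵒᵖ} (b : A.Rect r s U) (c : A.Rect s r U) :
    Bimodule.evalPure (A.rectPairing r s) (P := A.rectBimodule r s) (Q := A.rectBimodule s r)
      b c = b.mul c :=
  Bimodule.tensorLift_pure (A.rectBimodule r s) (A.rectBimodule s r)
    (Bimodule.regular (A.rectAlgebra r)) _ _ _ _ _ b c

theorem evalPure_rectPairing_smul {U : (Opens X)ᵒᵖ}
    (b : (A.rectBimodule r s).carrier.obj.obj U) (c : (A.rectBimodule s r).carrier.obj.obj U)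
    (b' : (A.rectBimodule r s).carrier.obj.obj U) :
    Bimodule.evalPure (A.rectPairing r s) b c • b' =
      op (Bimodule.evalPure (A.rectPairing s r) c b') • b := by
  refine (congrArg (fun a : A.Rect r r U => Rect.mul (A := A) (s := r) (t := s) a b')
    (evalPure_rectPairing r s b c)).trans (Eq.trans ?_
      (congrArg (fun a : A.Rect s s U => Rect.mul (A := A) (r := r) b a)
        (evalPure_rectPairing s r c b')).symm)
  exact Rect.mul_assoc (A := A) (r := r) (s := s) (t := r) (v := s) b c b'

theorem isMoritaContext_rectPairing :
    Bimodule.IsMoritaContext (A.rectPairing r s) (A.rectPairing s r) :=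
  ⟨fun _ => evalPure_rectPairing_smul s r, fun _ => evalPure_rectPairing_smul r s⟩

theorem isLocallySurjective_rectPairing [NeZero n] (hfree : A.LocallyFreeRankOne)
    (hperf : A.PerfectProduct) : Sheaf.IsLocallySurjective (A.rectPairing r s).hom := by
  refine Bimodule.isLocallySurjective_of_one_mem_range_tensorEval _ fun U x hx => ?_
  choose V hxV u y huy using fun i => exists_local_inverse hfree hperf (r i) (s 0) x
  let W : Opens X := U.unop ⊓ Finset.univ.inf V
  have hxW : x ∈ W := ⟨hx, by simpa [Opens.coe_finset_inf] using hxV⟩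
  let g (i : Fin m) : Opposite.op (V i) ⟶ Opposite.op W :=
    (homOfLE (inf_le_right.trans (Finset.inf_le (Finset.mem_univ i)))).op
  let b (i : Fin m) : A.Rect r s (Opposite.op W) :=
    Rect.single r s i 0 ((A.entry _ _).val.presheaf.map (g i) (u i))
  let c (i : Fin m) : A.Rect s r (Opposite.op W) :=
    Rect.single s r 0 i ((A.entry _ _).val.presheaf.map (g i) (y i))
  have hbc (i : Fin m) : (b i).mul (c i) = Rect.single r r i i (A.one (r i) _) :=
    (Rect.single_mul_single i 0 i _ _).trans (congrArg _
      ((A.map_mul (g i) _ _).symm.trans (by rw [huy, A.map_one])))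
  refine ⟨Opposite.op W, (homOfLE inf_le_left).op, hxW,
    ∑ i, (A.rectBimodule r s).tmul (A.rectBimodule s r).leftModule (b i) (c i), ?_⟩
  refine (map_sum _ _ _).trans ((Finset.sum_congr rfl fun i _ =>
    (evalPure_rectPairing r s (b i) (c i)).trans (hbc i)).trans ?_)
  exact Rect.sum_single_one r

end MatrixAlgebra

theorem combinatorial_restriction_morita_equivalence_general {X : TopCat.{u}}
    {K : Sheaf (siteOf X) CommRingCat.{u}} {q m n : ℕ} [NeZero m] [NeZero n]
    (A : MatrixAlgebra K q) (hfree : A.LocallyFreeRankOne) (hperf : A.PerfectProduct)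
    (r : Fin m → Fin (q + 1)) (s : Fin n → Fin (q + 1)) :
    Bimodule.IsMoritaEquivalence (A.rectBimodule r s) (A.rectBimodule s r)
      (A.rectPairing r s) (A.rectPairing s r) :=
  have := MatrixAlgebra.isLocallySurjective_rectPairing r s hfree hperf
  have := MatrixAlgebra.isLocallySurjective_rectPairing s r hfree hperf
  (MatrixAlgebra.isMoritaContext_rectPairing r s).isMoritaEquivalence

end

theorem combinatorial_restriction_morita_equivalence
    {X : TopCat.{u}} (K : Sheaf (siteOf X) CommRingCat.{u}) {p q : ℕ}
    (A : MatrixAlgebra K q) (hfree : A.LocallyFreeRankOne) (hperf : A.PerfectProduct)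
    (f : SimplexCategory.mk p ⟶ SimplexCategory.mk q) :
    Bimodule.IsMoritaEquivalence (A.bimod f) (A.bimodInv f) (A.alphaFwd f) (A.alphaBwd f) :=
  combinatorial_restriction_morita_equivalence_general A hfree hperf id fun j => f.toOrderHom j
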